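/- arXiv:1908.00885 — 4 statements merged into one kernel-verified Lean document; each statement's English description precedes it below -/
import Mathlib

section
/- Let d ≥ 2, let t ≥ 1 be an integer, let C ⊂ S^{d-1} be a tight spherical (2t+1)-design, and let p be real with 2t−2 ≤ p ≤ 2t and p > 0. Then for every positive integer k and N = k·|C|, the minimum over all N-tuples (x_1, …, x_N) of points of S^{d-1} of the discrete p-frame energy (1/N²) Σ_{i,j=1}^{N} |⟨x_i, x_j⟩|^p equals (1/|C|²) Σ_{x,y∈C} |⟨x,y⟩|^p, and it is attained by the configuration consisting of the points of C each repeated k times. -/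
/-!
The lower bound is a linear programming bound. Call a polynomial `f` positive definite on the sphere
if `f(⟨x,y⟩) = ∑ᵢ Fᵢ(x) Fᵢ(y)`. If `f` is positive definite of degree at most `2t+1`, then its
energy over any `N` points is at least its energy over the design `C`: the difference is a sum of
squares (`IsPD.energy_le`). For `p = 2t` and `p = 2t-2` this applies to `s ↦ s^p` itself.

For `2t-2 < p < 2t` put `q = p/2 - (t-1) ∈ (0,1)`. Then `|s|^p` is a positive multiple of
`∫_0^∞ L^(q-1) φ_L(s²) dL` with `φ_L(u) = u^t/(u+L)`, so it is enough to treat each `φ_L(s²)`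
(`TightData.energy_rational`). A tight `(2t+1)`-design is antipodal (`design_antipodal`), so the
squares of its inner products are `1`, a set `V ⊆ (0,1)`, and possibly `0`; with `ε = 1` or `0`
according to whether `0` occurs, `2|V| + ε = t`. Let `H` be the Hermite interpolant of `φ_L` at `0`
(if `ε = 1`), at each point of `V` twice, and at `1`. It has degree at most `t`, agrees with `φ_L`
at the squared inner products of `C`, and the error formula gives `H ≤ φ_L` on `[0,1]`; the signs of
all divided differences involved are read off from an explicit recursion (`GCl`).

It remains to see that `H(s²)` is positive definite (`TightData.exists_minorant`). Its Newton
coefficients are nonnegative, so it is enough that `s^ε ∏_{v ∈ T} (s² - v)` is positive definite for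
every initial segment `T` of `V`. Such products lie in the cone spanned by the monic orthogonal
polynomials of the distribution of squared inner products of `C`, weighted by `u^ε` (`cone_prod`).
Each of these orthogonal polynomials is positive definite (`TightData.isPD_of_isOP`): averaging
`P(⟨x,z⟩) P(⟨y,z⟩)` over `z ∈ C` is the same as integrating over the sphere, which by a
Funk–Hecke formula gives a polynomial in `⟨x,y⟩`, and orthogonality forces it to be a positive
multiple of `P`.
-/

open MeasureTheory Metric
open scoped RealInnerProductSpace

noncomputable section

/-- The unit sphere `S^{d-1}` in `ℝ^d` with the standard inner product. -/
abbrev Sph (d : ℕ) := Metric.sphere (0 : EuclideanSpace ℝ (Fin d)) 1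

/-- The uniform (rotation-invariant) Borel probability measure `σ` on the sphere
`S^{d-1}`, obtained by normalizing the canonical measure on the unit sphere induced
by the Lebesgue measure. -/
def sphσ (d : ℕ) : Measure (Sph d) :=
  (((volume : Measure (EuclideanSpace ℝ (Fin d))).toSphere) Set.univ)⁻¹ •
    ((volume : Measure (EuclideanSpace ℝ (Fin d))).toSphere)

variable {d : ℕ}

/-- The energy integral `I_f(μ) = ∫∫ f (⟨x,y⟩) dμ(x) dμ(y)` of a Borel measure `μ`
on the sphere `S^{d-1}`. -/
def energy (f : ℝ → ℝ) (μ : Measure (Sph d)) : ℝ :=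
  ∫ x, ∫ y, f ⟪(x : EuclideanSpace ℝ (Fin d)), (y : EuclideanSpace ℝ (Fin d))⟫ ∂μ ∂μ

/-- The uniform probability measure `(1/|C|) ∑_{x ∈ C} δ_x` on a finite set
`C ⊆ S^{d-1}`. -/
def unifOn (C : Finset (Sph d)) : Measure (Sph d) :=
  (C.card : ENNReal)⁻¹ • ∑ x ∈ C, Measure.dirac x

/-- Evaluation of a polynomial in `d` variables at a point of the sphere. -/
def evalPt (P : MvPolynomial (Fin d) ℝ) (x : Sph d) : ℝ :=
  MvPolynomial.eval (fun i => (x : EuclideanSpace ℝ (Fin d)) i) P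

/-- `C` is a spherical `t`-design: averaging any polynomial of total degree at most
`t` over `C` gives its mean over the sphere with respect to the uniform measure. -/
def IsSphDesign (d t : ℕ) (C : Finset (Sph d)) : Prop :=
  C.Nonempty ∧ ∀ P : MvPolynomial (Fin d) ℝ, P.totalDegree ≤ t →
    (∑ x ∈ C, evalPt P x) / (C.card : ℝ) = ∫ x, evalPt P x ∂(sphσ d)

/-- The set `A(C) = {⟨x,y⟩ : x, y ∈ C, x ≠ y}` of inner products between distinct
points of `C`. -/
def innerProds (C : Finset (Sph d)) : Set ℝ :=
  {t | ∃ x ∈ C, ∃ y ∈ C, x ≠ y ∧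
    ⟪(x : EuclideanSpace ℝ (Fin d)), (y : EuclideanSpace ℝ (Fin d))⟫ = t}

/-- `C` is a tight spherical `M`-design: it is a spherical `M`-design, and either
`M = 2m` and `A(C)` has exactly `m` elements, or `M = 2m - 1` and `A(C)` has exactly
`m` elements, one of which is `-1`. -/
def IsTightSphDesign (d M : ℕ) (C : Finset (Sph d)) : Prop :=
  IsSphDesign d M C ∧
    ((∃ m, M = 2 * m ∧ (innerProds C).ncard = m) ∨
     (∃ m, M + 1 = 2 * m ∧ (innerProds C).ncard = m ∧ (-1 : ℝ) ∈ innerProds C))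

/-- A function `h : [-1,1] → ℝ` is positive definite on `S^{d-1}` if all matrices
`(h(⟨x_i, x_j⟩))_{i,j}` arising from points of the sphere are positive semidefinite. -/
def IsPosDefOn (d : ℕ) (h : ℝ → ℝ) : Prop :=
  ∀ (N : ℕ) (x : Fin N → Sph d) (c : Fin N → ℂ),
    0 ≤ (∑ i, ∑ j,
      (h ⟪(x i : EuclideanSpace ℝ (Fin d)), (x j : EuclideanSpace ℝ (Fin d))⟫ : ℂ)
        * c i * (starRingEnd ℂ) (c j)).re

section helpers

open Polynomial

/-! ### Rotation invariance and a Funk–Hecke formula -/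

open scoped Pointwise in
/-- The uniform measure on the sphere is invariant under every linear isometry of `ℝ^d`. -/
lemma toSphere_preserved (φ : EuclideanSpace ℝ (Fin d) ≃ₗᵢ[ℝ] EuclideanSpace ℝ (Fin d))
    (g : Sph d → Sph d) (hg : ∀ z, (g z : EuclideanSpace ℝ (Fin d)) = φ z) :
    MeasurePreserving g (sphσ d) (sphσ d) := by
  have hcont : Continuous g := by
    refine Continuous.subtype_mk (f := fun z => (g z : EuclideanSpace ℝ (Fin d))) ?_ _
    simp only [hg]
    fun_prop
  have key : MeasurePreserving g ((volume : Measure (EuclideanSpace ℝ (Fin d))).toSphere)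
      ((volume : Measure (EuclideanSpace ℝ (Fin d))).toSphere) := by
    refine ⟨hcont.measurable, ?_⟩
    ext s hs
    rw [Measure.map_apply hcont.measurable hs, Measure.toSphere_apply' _ hs,
      Measure.toSphere_apply' _ (hcont.measurable hs)]
    congr 1
    have h1 : (Set.Ioo (0:ℝ) 1 • (((↑) : Sph d → EuclideanSpace ℝ (Fin d)) '' (g ⁻¹' s)))
        = φ ⁻¹' (Set.Ioo (0:ℝ) 1 • (((↑) : Sph d → EuclideanSpace ℝ (Fin d)) '' s)) := by
      ext x
      simp only [Set.mem_smul, Set.mem_image, Set.mem_preimage]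
      constructor
      · rintro ⟨a, ha, _, ⟨z, hz, rfl⟩, rfl⟩
        exact ⟨a, ha, _, ⟨g z, hz, rfl⟩, by rw [hg]; simp⟩
      · rintro ⟨a, ha, _, ⟨z, hz, rfl⟩, h⟩
        have hn : ‖φ.symm z‖ = 1 := by simp
        let w : Sph d := ⟨φ.symm z, by simp⟩
        have hw : g w = z := by
          apply Subtype.ext; rw [hg]; simp [w]
        refine ⟨a, ha, _, ⟨w, by rw [hw]; exact hz, rfl⟩, ?_⟩
        apply φ.injective
        rw [← h]; simp [w]
    rw [h1]
    exact (φ.measurePreserving.measure_preimage_equiv (f := φ.toMeasurableEquiv) _)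
  exact key.smul_measure _

/-- Mixed moments of the first two coordinates under the uniform measure. -/
def mom (d a b : ℕ) (h : 2 ≤ d) : ℝ :=
  ∫ z : Sph d, ((z : EuclideanSpace ℝ (Fin d)) ⟨0, by omega⟩) ^ a *
    ((z : EuclideanSpace ℝ (Fin d)) ⟨1, by omega⟩) ^ b ∂(sphσ d)

/-- By rotation invariance, mixed moments along an orthonormal pair do not depend on the pair. -/
lemma integral_orthonormal (h : 2 ≤ d) (x w : EuclideanSpace ℝ (Fin d))
    (hx : ‖x‖ = 1) (hw : ‖w‖ = 1) (hxw : ⟪x, w⟫ = 0) (a b : ℕ) :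
    ∫ z : Sph d, ⟪x, (z : EuclideanSpace ℝ (Fin d))⟫ ^ a * ⟪w, (z : EuclideanSpace ℝ (Fin d))⟫ ^ b
      ∂(sphσ d) = mom d a b h := by
  let i0 : Fin d := ⟨0, by omega⟩
  let i1 : Fin d := ⟨1, by omega⟩
  have h01 : i0 ≠ i1 := by simp [i0, i1]
  obtain ⟨B, hB⟩ := Orthonormal.exists_orthonormalBasis_extension_of_card_eq (𝕜 := ℝ)
    (E := EuclideanSpace ℝ (Fin d)) (ι := Fin d) (by simp)
    (v := fun i => if i = i0 then x else w) (s := {i0, i1}) (by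
      constructor
      · rintro ⟨i, hi⟩
        rcases hi with rfl | rfl
        · simpa using hx
        · simpa [h01.symm] using hw
      · rintro ⟨i, hi⟩ ⟨j, hj⟩ hij
        have hwx : ⟪w, x⟫ = 0 := by rw [real_inner_comm]; exact hxw
        rcases hi with rfl | rfl <;> rcases hj with rfl | rfl
        · exact absurd rfl hij
        · simpa [h01.symm] using hxw
        · simpa [h01.symm] using hwx
        · exact absurd rfl hij)
  have hB0 : B i0 = x := by simpa using hB i0 (by simp)
  have hB1 : B i1 = w := by simpa [h01.symm] using hB i1 (by simp)
  let g : Sph d → Sph d := fun z => ⟨B.repr z, by simp⟩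
  have hg := toSphere_preserved B.repr g (fun z => rfl)
  have hcont : Continuous (fun z : Sph d => ((z : EuclideanSpace ℝ (Fin d)) i0) ^ a *
    ((z : EuclideanSpace ℝ (Fin d)) i1) ^ b) := by fun_prop
  unfold mom
  conv_rhs => rw [← hg.map_eq]
  rw [integral_map hg.measurable.aemeasurable hcont.aestronglyMeasurable]
  congr 1
  ext z
  simp only [g, B.repr_apply_apply]
  rw [hB0, hB1]

lemma mom_odd (h : 2 ≤ d) (a b : ℕ) (hb : Odd b) : mom d a b h = 0 := by
  let x : EuclideanSpace ℝ (Fin d) := EuclideanSpace.single ⟨0, by omega⟩ 1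
  let w : EuclideanSpace ℝ (Fin d) := EuclideanSpace.single ⟨1, by omega⟩ 1
  have hxw : ⟪x, w⟫ = 0 := by simp [x, w, EuclideanSpace.inner_single_left]
  have h1 := integral_orthonormal h x w (by simp [x]) (by simp [w]) hxw a b
  have h2 := integral_orthonormal h x (-w) (by simp [x]) (by simp [w]) (by simp [hxw]) a b
  simp only [inner_neg_left, hb.neg_pow, mul_neg, integral_neg] at h2
  linarith

lemma exists_orthogonal_unit (h : 2 ≤ d) (x : Sph d) :
    ∃ w : EuclideanSpace ℝ (Fin d), ‖w‖ = 1 ∧ ⟪(x : EuclideanSpace ℝ (Fin d)), w⟫ = 0 := by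
  obtain ⟨B, hB⟩ := Orthonormal.exists_orthonormalBasis_extension_of_card_eq (𝕜 := ℝ)
    (E := EuclideanSpace ℝ (Fin d)) (ι := Fin d) (by simp)
    (v := fun _ => (x : EuclideanSpace ℝ (Fin d))) (s := {⟨0, by omega⟩}) (by
      constructor
      · rintro ⟨i, hi⟩
        simp
      · rintro ⟨i, hi⟩ ⟨j, hj⟩ hij
        exact absurd (Subtype.ext (hi.trans hj.symm)) hij)
  refine ⟨B ⟨1, by omega⟩, by simp, ?_⟩
  rw [← hB ⟨0, by omega⟩ (by simp)]
  exact B.orthonormal.2 (by simp)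

/-- Decomposition `y = ⟨x,y⟩ x + r w` with `w` a unit vector orthogonal to `x`. -/
lemma exists_decomp (h : 2 ≤ d) (x y : Sph d) :
    ∃ (w : EuclideanSpace ℝ (Fin d)) (r : ℝ), ‖w‖ = 1 ∧
      ⟪(x : EuclideanSpace ℝ (Fin d)), w⟫ = 0 ∧
      r ^ 2 = 1 - ⟪(x : EuclideanSpace ℝ (Fin d)), (y : EuclideanSpace ℝ (Fin d))⟫ ^ 2 ∧
      (y : EuclideanSpace ℝ (Fin d)) =
        ⟪(x : EuclideanSpace ℝ (Fin d)), (y : EuclideanSpace ℝ (Fin d))⟫ •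
          (x : EuclideanSpace ℝ (Fin d)) + r • w := by
  set s := ⟪(x : EuclideanSpace ℝ (Fin d)), (y : EuclideanSpace ℝ (Fin d))⟫ with hs
  set v : EuclideanSpace ℝ (Fin d) := (y : EuclideanSpace ℝ (Fin d)) - s • (x : EuclideanSpace ℝ (Fin d)) with hv
  have hx : ‖(x : EuclideanSpace ℝ (Fin d))‖ = 1 := by simp
  have hy : ‖(y : EuclideanSpace ℝ (Fin d))‖ = 1 := by simp
  have hxx : ⟪(x : EuclideanSpace ℝ (Fin d)), (x : EuclideanSpace ℝ (Fin d))⟫ = 1 := by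
    rw [real_inner_self_eq_norm_sq, hx]; norm_num
  have hyy : ⟪(y : EuclideanSpace ℝ (Fin d)), (y : EuclideanSpace ℝ (Fin d))⟫ = 1 := by
    rw [real_inner_self_eq_norm_sq, hy]; norm_num
  have hxv : ⟪(x : EuclideanSpace ℝ (Fin d)), v⟫ = 0 := by
    rw [hv, inner_sub_right, inner_smul_right, hxx, ← hs]; ring
  have hvv : ‖v‖ ^ 2 = 1 - s ^ 2 := by
    rw [← real_inner_self_eq_norm_sq]
    conv_lhs => rw [hv]
    simp only [inner_sub_left, inner_sub_right, inner_smul_left, inner_smul_right, hxx, hyy]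
    rw [real_inner_comm (x : EuclideanSpace ℝ (Fin d)) (y : EuclideanSpace ℝ (Fin d)), ← hs]
    simp; ring
  by_cases h0 : v = 0
  · obtain ⟨w, hw1, hw2⟩ := exists_orthogonal_unit h x
    refine ⟨w, 0, hw1, hw2, ?_, ?_⟩
    · rw [← hvv, h0]; simp
    · simpa [sub_eq_zero] using hv.symm.trans h0
  · have hn : ‖v‖ ≠ 0 := norm_ne_zero_iff.mpr h0
    refine ⟨‖v‖⁻¹ • v, ‖v‖, ?_, ?_, hvv, ?_⟩
    · rw [norm_smul, norm_inv, norm_norm, inv_mul_cancel₀ hn]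
    · rw [inner_smul_right, hxv, mul_zero]
    · rw [smul_smul, mul_inv_cancel₀ hn, one_smul, hv]; abel

lemma sphσ_finite (d : ℕ) : IsFiniteMeasure (sphσ d) := by
  unfold sphσ
  by_cases h : ((volume : Measure (EuclideanSpace ℝ (Fin d))).toSphere) Set.univ = 0
  · rw [Measure.measure_univ_eq_zero.mp h]; infer_instance
  · exact Measure.smul_finite _ (ENNReal.inv_ne_top.mpr h)

lemma integrable_cont {f : Sph d → ℝ} (hf : Continuous f) : Integrable f (sphσ d) := by
  have := sphσ_finite d
  have : CompactSpace (Sph d) := isCompact_iff_compactSpace.mp (isCompact_sphere _ _)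
  exact hf.integrable_of_hasCompactSupport (HasCompactSupport.of_compactSpace f)

/-- Expanding `⟨y,z⟩^b` with `y = s x + r w`, only the even powers of `r` survive integration, and
`r² = 1 - s²`; hence the integral is a polynomial in `s = ⟨x,y⟩`. -/
lemma funk_hecke_monomial (h : 2 ≤ d) (a b : ℕ) :
    ∃ R : ℝ[X], R.natDegree ≤ b ∧ ∀ x y : Sph d,
      ∫ z : Sph d, ⟪(x : EuclideanSpace ℝ (Fin d)), (z : EuclideanSpace ℝ (Fin d))⟫ ^ a *
        ⟪(y : EuclideanSpace ℝ (Fin d)), (z : EuclideanSpace ℝ (Fin d))⟫ ^ b ∂(sphσ d)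
        = R.eval ⟪(x : EuclideanSpace ℝ (Fin d)), (y : EuclideanSpace ℝ (Fin d))⟫ := by
  refine ⟨∑ i ∈ Finset.range (b + 1), if Even i then
    C (mom d (a + (b - i)) i h * (b.choose i)) * (X ^ (b - i) * (1 - X ^ 2) ^ (i / 2)) else 0, ?_, ?_⟩
  · apply natDegree_sum_le_of_forall_le
    intro i hi
    split_ifs with hev
    · refine (natDegree_C_mul_le _ _).trans (natDegree_mul_le.trans ?_)
      have h1 : ((1 - X ^ 2 : ℝ[X]) ^ (i / 2)).natDegree ≤ (i / 2) * 2 :=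
        natDegree_pow_le_of_le _ ((natDegree_sub_le _ _).trans (by simp))
      have h2 : (X ^ (b - i) : ℝ[X]).natDegree ≤ b - i := natDegree_X_pow_le _
      have : i < b + 1 := Finset.mem_range.mp hi
      omega
    · simp
  · intro x y
    obtain ⟨w, r, hw, hxw, hr, hy⟩ := exists_decomp h x y
    set s := ⟪(x : EuclideanSpace ℝ (Fin d)), (y : EuclideanSpace ℝ (Fin d))⟫ with hs
    have hx : ‖(x : EuclideanSpace ℝ (Fin d))‖ = 1 := by simp
    have e1 : ∀ z : Sph d, ⟪(x : EuclideanSpace ℝ (Fin d)), (z : EuclideanSpace ℝ (Fin d))⟫ ^ a *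
        ⟪(y : EuclideanSpace ℝ (Fin d)), (z : EuclideanSpace ℝ (Fin d))⟫ ^ b =
        ∑ i ∈ Finset.range (b + 1), (r ^ i * s ^ (b - i) * (b.choose i)) *
          (⟪(x : EuclideanSpace ℝ (Fin d)), (z : EuclideanSpace ℝ (Fin d))⟫ ^ (a + (b - i)) *
          ⟪w, (z : EuclideanSpace ℝ (Fin d))⟫ ^ i) := by
      intro z
      rw [hy, inner_add_left, inner_smul_left, inner_smul_left, add_comm, add_pow, Finset.mul_sum]
      refine Finset.sum_congr rfl fun i _ => ?_
      simp only [conj_trivial, mul_pow, pow_add]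
      ring
    simp_rw [e1]
    rw [integral_finsetSum _ (fun i _ => integrable_cont (by fun_prop)), eval_finsetSum]
    refine Finset.sum_congr rfl fun i _ => ?_
    rw [integral_const_mul, integral_orthonormal h x w hx hw hxw]
    split_ifs with hev
    · have : r ^ i = (1 - s ^ 2) ^ (i / 2) := by
        rw [← hr, ← pow_mul, Nat.mul_div_cancel' hev.two_dvd]
      simp [this]; ring
    · rw [mom_odd h _ _ (Nat.not_even_iff_odd.mp hev)]; simp

/-- The spherical convolution of the zonal polynomials `P` and `Q` is a polynomial in `⟨x,y⟩`, of
degree at most that of `Q`. -/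
lemma funk_hecke (h : 2 ≤ d) (P Q : ℝ[X]) (n : ℕ) (hn : Q.natDegree ≤ n) :
    ∃ R : ℝ[X], R.natDegree ≤ n ∧ ∀ x y : Sph d,
      ∫ z : Sph d, P.eval ⟪(x : EuclideanSpace ℝ (Fin d)), (z : EuclideanSpace ℝ (Fin d))⟫ *
        Q.eval ⟪(y : EuclideanSpace ℝ (Fin d)), (z : EuclideanSpace ℝ (Fin d))⟫ ∂(sphσ d)
        = R.eval ⟪(x : EuclideanSpace ℝ (Fin d)), (y : EuclideanSpace ℝ (Fin d))⟫ := by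
  choose R hR1 hR2 using fun a b => funk_hecke_monomial (d := d) h a b
  refine ⟨∑ a ∈ Finset.range (P.natDegree + 1), ∑ b ∈ Finset.range (Q.natDegree + 1),
    C (P.coeff a * Q.coeff b) * R a b, ?_, ?_⟩
  · refine natDegree_sum_le_of_forall_le _ _ fun a _ => natDegree_sum_le_of_forall_le _ _ fun b hb => ?_
    have := Finset.mem_range.mp hb
    exact (natDegree_C_mul_le _ _).trans ((hR1 a b).trans (by omega))
  · intro x y
    simp_rw [eval_eq_sum_range (p := P), eval_eq_sum_range (p := Q), Finset.sum_mul_sum]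
    rw [integral_finsetSum _ (fun i _ => integrable_cont (by fun_prop)), eval_finsetSum]
    refine Finset.sum_congr rfl fun a _ => ?_
    rw [integral_finsetSum _ (fun i _ => integrable_cont (by fun_prop)), eval_finsetSum]
    refine Finset.sum_congr rfl fun b _ => ?_
    rw [eval_mul, eval_C, ← hR2, ← integral_const_mul]
    congr 1; ext z; ring

/-! ### Orthogonal polynomials of a discrete measure -/

/-- The bilinear form `∑_{u ∈ S} w(u) p(u) q(u)` of the discrete measure with weights `w`
on the finite set `S`. -/
def ip (S : Finset ℝ) (w : ℝ → ℝ) (p q : ℝ[X]) : ℝ := ∑ u ∈ S, w u * (p.eval u * q.eval u)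

lemma ip_comm (S : Finset ℝ) (w : ℝ → ℝ) (p q : ℝ[X]) : ip S w p q = ip S w q p :=
  Finset.sum_congr rfl fun _ _ => by ring

lemma ip_add_left (S : Finset ℝ) (w : ℝ → ℝ) (p p' q : ℝ[X]) :
    ip S w (p + p') q = ip S w p q + ip S w p' q := by
  simp only [ip, ← Finset.sum_add_distrib, eval_add]
  exact Finset.sum_congr rfl fun _ _ => by ring

lemma ip_sub_left (S : Finset ℝ) (w : ℝ → ℝ) (p p' q : ℝ[X]) :
    ip S w (p - p') q = ip S w p q - ip S w p' q := by
  simp only [ip, ← Finset.sum_sub_distrib, eval_sub]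
  exact Finset.sum_congr rfl fun _ _ => by ring

lemma ip_smul_left (S : Finset ℝ) (w : ℝ → ℝ) (c : ℝ) (p q : ℝ[X]) :
    ip S w (C c * p) q = c * ip S w p q := by
  simp only [ip, Finset.mul_sum, eval_mul, eval_C]
  exact Finset.sum_congr rfl fun _ _ => by ring

lemma ip_self_nonneg {S : Finset ℝ} {w : ℝ → ℝ} (hw : ∀ u ∈ S, 0 < w u) (p : ℝ[X]) :
    0 ≤ ip S w p p :=
  Finset.sum_nonneg fun u hu => mul_nonneg (hw u hu).le (mul_self_nonneg _)

lemma eq_zero_of_ip_self {S : Finset ℝ} {w : ℝ → ℝ} (hw : ∀ u ∈ S, 0 < w u) {p : ℝ[X]}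
    (hp : p.degree < S.card) (h : ip S w p p = 0) : p = 0 := by
  refine eq_zero_of_degree_lt_of_eval_finset_eq_zero S hp fun u hu => ?_
  have := (Finset.sum_eq_zero_iff_of_nonneg
    (fun u hu => mul_nonneg (hw u hu).le (mul_self_nonneg (p.eval u)))).mp h u hu
  simpa [(hw u hu).ne'] using this

/-- `p` is the monic orthogonal polynomial of degree `k` for the discrete measure `(S, w)`. -/
def IsOP (S : Finset ℝ) (w : ℝ → ℝ) (k : ℕ) (p : ℝ[X]) : Prop :=
  p.Monic ∧ p.natDegree = k ∧ ∀ q : ℝ[X], q.degree < k → ip S w p q = 0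

/-- The form `ip` is nondegenerate on polynomials of degree less than `k`, so `X ^ k` can be
corrected by such a polynomial to become orthogonal to all of them. -/
lemma exists_isOP {S : Finset ℝ} {w : ℝ → ℝ} (hw : ∀ u ∈ S, 0 < w u) {k : ℕ} (hk : k < S.card) :
    ∃ p, IsOP S w k p := by
  let B : ℝ[X] →ₗ[ℝ] ℝ[X] →ₗ[ℝ] ℝ := LinearMap.mk₂ ℝ (ip S w) (ip_add_left S w)
    (fun c p q => by rw [smul_eq_C_mul, ip_smul_left, smul_eq_mul])
    (fun p q q' => by rw [ip_comm, ip_add_left, ip_comm S w q, ip_comm S w q'])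
    (fun c p q => by rw [smul_eq_C_mul, ip_comm, ip_smul_left, smul_eq_mul, ip_comm])
  have : FiniteDimensional ℝ (degreeLT ℝ k) := (degreeLTEquiv ℝ k).symm.finiteDimensional
  let T : degreeLT ℝ k →ₗ[ℝ] Module.Dual ℝ (degreeLT ℝ k) :=
    (B.domRestrict₁₂ (degreeLT ℝ k) (degreeLT ℝ k))
  have hT : Function.Injective T := by
    rw [← LinearMap.ker_eq_bot, LinearMap.ker_eq_bot']
    rintro ⟨r, hr⟩ h
    have h1 : ip S w r r = 0 := by
      exact LinearMap.congr_fun h ⟨r, hr⟩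
    have h2 := mem_degreeLT.mp hr
    have := eq_zero_of_ip_self hw (h2.trans (by exact_mod_cast hk)) h1
    simpa using this
  have hs : Function.Surjective T :=
    (LinearMap.injective_iff_surjective_of_finrank_eq_finrank
      (Subspace.dual_finrank_eq (V := degreeLT ℝ k)).symm).mp hT
  obtain ⟨⟨r, hr⟩, h⟩ := hs ((B (X ^ k)).domRestrict (degreeLT ℝ k))
  have hr' := mem_degreeLT.mp hr
  have hd : r.degree < (X ^ k : ℝ[X]).degree := by simpa using hr'
  refine ⟨X ^ k - r, (monic_X_pow k).sub_of_left hd, ?_, fun q hq => ?_⟩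
  · rw [natDegree_eq_of_degree_eq (degree_sub_eq_left_of_degree_lt hd), natDegree_X_pow]
  · have h3 : ip S w r q = ip S w (X ^ k) q := LinearMap.congr_fun h ⟨q, mem_degreeLT.mpr hq⟩
    rw [ip_sub_left, h3, sub_self]

/-- The orthogonal polynomial of degree `k` is unique up to a scalar. -/
lemma IsOP.eq_smul {S : Finset ℝ} {w : ℝ → ℝ} (hw : ∀ u ∈ S, 0 < w u) {k : ℕ} (hk : k < S.card)
    {p : ℝ[X]} (hp : IsOP S w k p) {g : ℝ[X]} (hg : g.natDegree ≤ k)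
    (ho : ∀ q : ℝ[X], q.degree < k → ip S w g q = 0) :
    ∃ b, g = C b * p ∧ b * ip S w p p = ip S w g p := by
  have hlt : (g - C (g.coeff k) * p).degree < k := by
    rw [degree_lt_iff_coeff_zero]
    intro m hm
    rcases hm.eq_or_lt with rfl | hm
    · have : p.coeff k = 1 := by rw [← hp.2.1]; exact hp.1
      simp [this]
    · have h1 : g.coeff m = 0 := coeff_eq_zero_of_natDegree_lt (by omega)
      have h2 : p.coeff m = 0 := coeff_eq_zero_of_natDegree_lt (by rw [hp.2.1]; omega)
      simp [h1, h2]
  have h0 : g - C (g.coeff k) * p = 0 := by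
    refine eq_zero_of_ip_self hw (hlt.trans (by exact_mod_cast hk)) ?_
    rw [ip_sub_left, ip_smul_left, ho _ hlt, hp.2.2 _ hlt]; ring
  have h1 := sub_eq_zero.mp h0
  exact ⟨g.coeff k, h1, by rw [← ip_smul_left, ← h1]⟩

lemma IsOP.pos {S : Finset ℝ} {w : ℝ → ℝ} (hw : ∀ u ∈ S, 0 < w u) {k : ℕ} (hk : k < S.card)
    {p : ℝ[X]} (hp : IsOP S w k p) : 0 < ip S w p p := by
  refine (ip_self_nonneg hw p).lt_of_ne fun h => ?_
  refine hp.1.ne_zero (eq_zero_of_ip_self hw ?_ h.symm)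
  rw [degree_eq_natDegree hp.1.ne_zero, hp.2.1]
  exact_mod_cast hk

/-- Christoffel-type relation. Let `v ∈ S` be an extreme point of `S`, the smallest if `τ = 1`, the
largest if `τ = -1`, and let `p'` be orthogonal for the weight `τ (u - v) w(u)`. Then
`τ (X - v) p' = τ p₁ + b p₀` with `b ≥ 0`, where `p₀`, `p₁` are orthogonal for `w`. -/
lemma isOP_linear_mul {S : Finset ℝ} {w : ℝ → ℝ} (hw : ∀ u ∈ S, 0 < w u) {v τ : ℝ}
    (hv : v ∈ S) (hτ : ∀ u ∈ S.erase v, 0 < τ * (u - v))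
    {k : ℕ} (hk : k + 1 < S.card) {p₀ p₁ p' : ℝ[X]} (h₀ : IsOP S w k p₀)
    (h₁ : IsOP S w (k + 1) p₁)
    (h' : IsOP (S.erase v) (fun u => τ * (u - v) * w u) k p') :
    ∃ b, 0 ≤ b ∧ C τ * (X - C v) * p' = C τ * p₁ + C b * p₀ := by
  have hw' : ∀ u ∈ S.erase v, 0 < τ * (u - v) * w u := fun u hu =>
    mul_pos (hτ u hu) (hw u (Finset.mem_of_mem_erase hu))
  have hip : ∀ q, ip S w (C τ * (X - C v) * p') q
      = ip (S.erase v) (fun u => τ * (u - v) * w u) p' q := by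
    intro q
    rw [ip, ← Finset.add_sum_erase _ _ hv]
    simp only [eval_mul, eval_sub, eval_X, eval_C, sub_self, mul_zero, zero_mul, zero_add]
    exact Finset.sum_congr rfl fun _ _ => by ring
  have hdeg : (C τ * (X - C v) * p' - C τ * p₁).natDegree ≤ k := by
    rw [natDegree_le_iff_coeff_eq_zero]
    intro m hm
    have e : (C τ * (X - C v) * p' - C τ * p₁) = C τ * ((X - C v) * p' - p₁) := by ring
    rw [e, coeff_C_mul]
    have hmon : ((X - C v) * p').Monic := (monic_X_sub_C v).mul h'.1
    have hnd : ((X - C v) * p').natDegree = k + 1 := by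
      rw [(monic_X_sub_C v).natDegree_mul h'.1, natDegree_X_sub_C, h'.2.1, add_comm]
    rcases (Nat.succ_le_of_lt hm).eq_or_lt with rfl | hm'
    · have h1 : ((X - C v) * p').coeff (k + 1) = 1 := by
        have := hmon.coeff_natDegree; rwa [hnd] at this
      have h2 : p₁.coeff (k + 1) = 1 := by
        have := h₁.1.coeff_natDegree; rwa [h₁.2.1] at this
      simp only [Nat.succ_eq_add_one, coeff_sub, h1, h2]; ring
    · rw [coeff_sub, coeff_eq_zero_of_natDegree_lt (by rw [hnd]; exact hm'),
        coeff_eq_zero_of_natDegree_lt (by rw [h₁.2.1]; exact hm')]; ring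
  obtain ⟨b, hb1, hb2⟩ := h₀.eq_smul hw (by omega) hdeg (by
    intro q hq
    rw [ip_sub_left, hip, h'.2.2 q hq, ip_smul_left, h₁.2.2 q (hq.trans (by exact_mod_cast k.lt_succ_self))]
    ring)
  refine ⟨b, ?_, by rw [← hb1]; ring⟩
  have hlt : (p₀ - p').degree < k := by
    have hd : p₀.degree = k := by rw [degree_eq_natDegree h₀.1.ne_zero, h₀.2.1]
    have hd' : p'.degree = k := by rw [degree_eq_natDegree h'.1.ne_zero, h'.2.1]
    rw [← hd]
    exact degree_sub_lt_left (hd.trans hd'.symm) h₀.1.ne_zero (by rw [h₀.1.leadingCoeff, h'.1.leadingCoeff])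
  have h3 : ip (S.erase v) (fun u => τ * (u - v) * w u) p' p₀
      = ip (S.erase v) (fun u => τ * (u - v) * w u) p' p' := by
    have := h'.2.2 _ hlt
    rw [ip_comm, ip_sub_left, sub_eq_zero] at this
    rw [ip_comm, this]
  have hd0 : p₀.degree < ((k + 1 : ℕ) : WithBot ℕ) := by
    rw [degree_eq_natDegree h₀.1.ne_zero, h₀.2.1]; exact_mod_cast k.lt_succ_self
  rw [ip_sub_left, hip, ip_smul_left, h₁.2.2 _ hd0, h3] at hb2
  have h4 := ip_self_nonneg hw' p'
  have h5 := h₀.pos hw (by omega)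
  by_contra hneg
  push Not at hneg
  nlinarith

lemma isOP_zero {S : Finset ℝ} {w : ℝ → ℝ} {p : ℝ[X]} (hp : IsOP S w 0 p) : p = 1 :=
  hp.1.natDegree_eq_zero.mp hp.2.1

/-- An orthogonal polynomial is nonnegative at the largest point of the support: evaluate
`isOP_linear_mul` with `τ = -1` at that point and induct on the degree. -/
lemma IsOP.eval_max_nonneg {S : Finset ℝ} {w : ℝ → ℝ} (hw : ∀ u ∈ S, 0 < w u) {M : ℝ}
    (hM : M ∈ S) (hmax : ∀ u ∈ S, u ≤ M) :
    ∀ {k : ℕ}, k < S.card → ∀ {p : ℝ[X]}, IsOP S w k p → 0 ≤ p.eval M := by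
  intro k
  induction k with
  | zero => intro _ p hp; rw [isOP_zero hp]; simp
  | succ k ih =>
    intro hk p hp
    have hτ : ∀ u ∈ S.erase M, 0 < (-1 : ℝ) * (u - M) := fun u hu => by
      have := (hmax u (Finset.mem_of_mem_erase hu)).lt_of_ne (Finset.ne_of_mem_erase hu)
      linarith
    obtain ⟨p₀, h₀⟩ := exists_isOP hw (k := k) (by omega)
    obtain ⟨p', h'⟩ := exists_isOP (S := S.erase M) (w := fun u => -1 * (u - M) * w u) (k := k)
      (fun u hu => mul_pos (hτ u hu) (hw u (Finset.mem_of_mem_erase hu)))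
      (by rw [Finset.card_erase_of_mem hM]; omega)
    obtain ⟨b, hb, e⟩ := isOP_linear_mul hw hM hτ hk h₀ hp h'
    have e' := congrArg (eval M) e
    simp only [eval_mul, eval_add, eval_sub, eval_C, eval_X, sub_self] at e'
    nlinarith [mul_nonneg hb (ih (by omega) h₀)]

/-- If `l` lists the smallest points of `S` in increasing order, then `∏_{v ∈ l} (X - v)` lies in the
convex cone generated by the orthogonal polynomials of degree at most `l.length`. The cone
is encoded as an arbitrary predicate `Pd` closed under sums and nonnegative multiples. -/
lemma cone_prod (l : List ℝ) : ∀ (S : Finset ℝ) (w : ℝ → ℝ), (∀ u ∈ S, 0 < w u) →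
    (∀ v ∈ l, v ∈ S) → l.length < S.card → l.Pairwise (· < ·) →
    (∀ v ∈ l, ∀ u ∈ S, u ∉ l → v < u) →
    ∀ Pd : ℝ[X] → Prop, (∀ p q, Pd p → Pd q → Pd (p + q)) →
      (∀ c p, 0 ≤ c → Pd p → Pd (C c * p)) →
      (∀ k ≤ l.length, ∀ p, IsOP S w k p → Pd p) →
      Pd (l.map fun v => X - C v).prod := by
  induction l with
  | nil =>
    intro S w hw _ hcard _ _ Pd _ _ hop
    obtain ⟨p, hp⟩ := exists_isOP hw (k := 0) hcard
    have := hop 0 le_rfl p hp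
    rw [isOP_zero hp] at this
    simpa using this
  | cons v l ih =>
    intro S w hw hS hcard hpw hinit Pd hadd hsmul hop
    have hvS : v ∈ S := hS v (by simp)
    rw [List.pairwise_cons] at hpw
    have hmin : ∀ u ∈ S.erase v, 0 < (1 : ℝ) * (u - v) := by
      intro u hu
      have hu' := Finset.mem_erase.mp hu
      by_cases hul : u ∈ l
      · linarith [hpw.1 u hul]
      · linarith [hinit v (by simp) u hu'.2 (by simp [hul, hu'.1])]
    have hw' : ∀ u ∈ S.erase v, 0 < 1 * (u - v) * w u := fun u hu =>
      mul_pos (hmin u hu) (hw u (Finset.mem_of_mem_erase hu))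
    have hcard' : l.length < (S.erase v).card := by
      rw [Finset.card_erase_of_mem hvS]; simp at hcard; omega
    rw [List.map_cons, List.prod_cons]
    refine ih (S.erase v) (fun u => 1 * (u - v) * w u) hw' ?_ hcard' hpw.2 ?_
      (fun r => Pd ((X - C v) * r)) ?_ ?_ ?_
    · intro u hu
      exact Finset.mem_erase.mpr ⟨(hpw.1 u hu).ne', hS u (by simp [hu])⟩
    · intro a ha u hu hul
      have hu' := Finset.mem_erase.mp hu
      exact hinit a (by simp [ha]) u hu'.2 (by simp [hul, hu'.1])
    · intro p q hp hq
      simpa [mul_add] using hadd _ _ hp hq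
    · intro c p hc hp
      have := hsmul c _ hc hp
      rwa [mul_left_comm] at this
    · intro k hk p' h'
      simp only [List.length_cons] at hcard hop
      obtain ⟨p₀, h₀⟩ := exists_isOP hw (k := k) (by omega)
      obtain ⟨p₁, h₁⟩ := exists_isOP hw (k := k + 1) (by omega)
      obtain ⟨b, hb, e⟩ := isOP_linear_mul hw hvS hmin (by omega) h₀ h₁ h'
      have e' : (X - C v) * p' = p₁ + C b * p₀ := by simpa using e
      show Pd ((X - C v) * p')
      rw [e']
      exact hadd _ _ (hop _ (by omega) _ h₁) (hsmul _ _ hb (hop _ (by omega) _ h₀))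

/-! ### Divided differences of `u ^ n / (u + L)` -/

/-- Functions of level `n`: those obtained from `c / (u + L)`, `c ≥ 0`, by `n` operations
`f ↦ u f + K` with `K ≥ 0`. A divided difference lowers the level by one, so such a function has
nonnegative divided differences up to order `n` at nonnegative nodes. -/
inductive GCl (L : ℝ) : ℕ → (ℝ → ℝ) → Prop
  | base (c : ℝ) (hc : 0 ≤ c) : GCl L 0 (fun u => c / (u + L))
  | step (n : ℕ) (f : ℝ → ℝ) (K : ℝ) (hK : 0 ≤ K) (hf : GCl L n f) :
      GCl L (n + 1) (fun u => u * f u + K)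

lemma GCl.nonneg {L : ℝ} (hL : 0 < L) {n : ℕ} {f : ℝ → ℝ} (hf : GCl L n f) {a : ℝ} (ha : 0 ≤ a) :
    0 ≤ f a := by
  induction hf with
  | base c hc => positivity
  | step n f K hK hf ih => positivity

/-- At level `0` the divided difference changes sign. -/
lemma GCl.base_dd {L : ℝ} (hL : 0 < L) {f : ℝ → ℝ} (hf : GCl L 0 f) {a : ℝ}
    (ha : 0 ≤ a) : ∃ f', GCl L 0 f' ∧ ∀ u, 0 ≤ u → f u = f a - (u - a) * f' u := by
  cases hf with
  | base c hc =>
    refine ⟨_, GCl.base (c / (a + L)) (by positivity), fun u hu => ?_⟩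
    have : a + L ≠ 0 := by positivity
    have : u + L ≠ 0 := by positivity
    field_simp; ring

lemma GCl.dd {L : ℝ} (hL : 0 < L) : ∀ {n : ℕ} {f : ℝ → ℝ}, GCl L (n + 1) f → ∀ {a : ℝ},
    0 ≤ a → ∃ f', GCl L n f' ∧ ∀ u, 0 ≤ u → f u = f a + (u - a) * f' u := by
  intro n
  induction n with
  | zero =>
    intro f hf a ha
    cases hf with
    | step n f K hK hf =>
      cases hf with
      | base c hc =>
        refine ⟨_, GCl.base (c * L / (a + L)) (by positivity), fun u hu => ?_⟩
        have : a + L ≠ 0 := by positivity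
        have : u + L ≠ 0 := by positivity
        field_simp; ring
  | succ n ih =>
    intro f hf a ha
    cases hf with
    | step _ f K hK hf =>
      obtain ⟨f', hf', e⟩ := ih hf ha
      refine ⟨_, GCl.step n f' (f a) (hf.nonneg hL ha) hf', fun u hu => ?_⟩
      simp only [e u hu]; ring

/-- Newton interpolation of a function of level `n + l.length` at the nodes `l`: the interpolant `H`
lies in any convex cone `Pd` containing the Newton basis, because its coefficients are
nonnegative, and the last divided difference `f'` has level `n`. -/
lemma GCl.newton {L : ℝ} (hL : 0 < L) (l : List ℝ) : ∀ {n : ℕ} {f : ℝ → ℝ},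
    GCl L (n + l.length) f → (∀ a ∈ l, 0 ≤ a) →
    ∀ Pd : ℝ[X] → Prop, (∀ p q, Pd p → Pd q → Pd (p + q)) →
      (∀ c p, 0 ≤ c → Pd p → Pd (C c * p)) →
      (∀ l', l' <+: l → Pd (l'.map fun v => X - C v).prod) →
    ∃ (H : ℝ[X]) (f' : ℝ → ℝ), Pd H ∧ GCl L n f' ∧
      ∀ u, 0 ≤ u → f u = H.eval u + (l.map fun v => X - C v).prod.eval u * f' u := by
  induction l with
  | nil =>
    intro n f hf _ Pd _ hsmul hpre
    refine ⟨C 0 * 1, f, hsmul 0 1 le_rfl (by simpa using hpre [] (by simp)), hf, fun u _ => by simp⟩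
  | cons a l ih =>
    intro n f hf hl Pd hadd hsmul hpre
    have ha : 0 ≤ a := hl a (by simp)
    obtain ⟨f₁, hf₁, e₁⟩ := GCl.dd hL (n := n + l.length) hf ha
    obtain ⟨H, f', hH, hf', e⟩ := ih hf₁ (fun b hb => hl b (by simp [hb]))
      (fun r => Pd ((X - C a) * r))
      (fun p q hp hq => by simpa [mul_add] using hadd _ _ hp hq)
      (fun c p hc hp => by have := hsmul c _ hc hp; rwa [mul_left_comm] at this)
      (fun l' hl' => by
        have := hpre (a :: l') (by simpa using hl')
        simpa using this)
    refine ⟨C (f a) * 1 + (X - C a) * H, f', hadd _ _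
      (hsmul _ _ (hf.nonneg hL ha) (by simpa using hpre [] (by simp))) hH, hf', fun u hu => ?_⟩
    rw [e₁ u hu, e u hu]
    simp; ring

lemma GCl.pow {L : ℝ} (n : ℕ) : GCl L n (fun u => u ^ n / (u + L)) := by
  induction n with
  | zero => simpa using GCl.base (L := L) 1 zero_le_one
  | succ n ih =>
    have := GCl.step n _ 0 le_rfl ih
    convert this using 2
    ring

/-! ### Positive definite polynomials and designs -/

/-- The Euclidean inner product of two points of the sphere. -/
abbrev dp (x y : Sph d) : ℝ := ⟪(x : EuclideanSpace ℝ (Fin d)), (y : EuclideanSpace ℝ (Fin d))⟫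

lemma dp_comm (x y : Sph d) : dp x y = dp y x := real_inner_comm _ _

lemma dp_self (x : Sph d) : dp x x = 1 := by
  rw [dp, real_inner_self_eq_norm_sq]; simp

lemma dp_neg_left (x y : Sph d) : dp (-x) y = -dp x y := by simp [dp]

lemma dp_neg_right (x y : Sph d) : dp x (-y) = -dp x y := by simp [dp]

lemma abs_dp_le (x y : Sph d) : |dp x y| ≤ 1 := by
  have := abs_real_inner_le_norm (x : EuclideanSpace ℝ (Fin d)) (y : EuclideanSpace ℝ (Fin d))
  simpa using this

lemma dp_sq_le (x y : Sph d) : dp x y ^ 2 ≤ 1 := by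
  rw [sq_le_one_iff_abs_le_one]; exact abs_dp_le x y

lemma dp_eq_one_iff (x y : Sph d) : dp x y = 1 ↔ x = y := by
  rw [dp, inner_eq_one_iff_of_norm_eq_one (by simp) (by simp), Subtype.ext_iff]

/-- Positive definiteness of the kernel `f(⟨x,y⟩)` on `S^{d-1}`, in the form of a finite feature map:
`f(⟨x,y⟩) = ∑ᵢ Fᵢ(x) Fᵢ(y)`. -/
def IsPD (d : ℕ) (f : ℝ[X]) : Prop :=
  ∃ (ι : Type) (_ : Fintype ι) (F : ι → Sph d → ℝ), ∀ x y : Sph d,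
    f.eval (dp x y) = ∑ i, F i x * F i y

lemma IsPD.add {f g : ℝ[X]} (hf : IsPD d f) (hg : IsPD d g) : IsPD d (f + g) := by
  obtain ⟨ι, _, F, hF⟩ := hf
  obtain ⟨κ, _, G, hG⟩ := hg
  exact ⟨ι ⊕ κ, inferInstance, Sum.elim F G, fun x y => by simp [hF, hG]⟩

lemma IsPD.smul {c : ℝ} (hc : 0 ≤ c) {f : ℝ[X]} (hf : IsPD d f) : IsPD d (C c * f) := by
  obtain ⟨ι, _, F, hF⟩ := hf
  refine ⟨ι, inferInstance, fun i x => √c * F i x, fun x y => ?_⟩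
  rw [eval_mul, eval_C, hF, Finset.mul_sum]
  refine Finset.sum_congr rfl fun i _ => ?_
  linear_combination (-(F i x * F i y)) * Real.mul_self_sqrt hc

lemma IsPD.mul {f g : ℝ[X]} (hf : IsPD d f) (hg : IsPD d g) : IsPD d (f * g) := by
  obtain ⟨ι, _, F, hF⟩ := hf
  obtain ⟨κ, _, G, hG⟩ := hg
  refine ⟨ι × κ, inferInstance, fun i x => F i.1 x * G i.2 x, fun x y => ?_⟩
  rw [eval_mul, hF, hG, Finset.sum_mul_sum, Fintype.sum_prod_type]
  exact Finset.sum_congr rfl fun i _ => Finset.sum_congr rfl fun j _ => by ring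

lemma isPD_one : IsPD d 1 := ⟨Unit, inferInstance, fun _ _ => 1, fun x y => by simp⟩

lemma isPD_X : IsPD d X :=
  ⟨Fin d, inferInstance, fun i x => (x : EuclideanSpace ℝ (Fin d)) i, fun x y => by
    simp only [eval_X, dp, PiLp.inner_apply, RCLike.inner_apply, conj_trivial]
    exact Finset.sum_congr rfl fun i _ => by ring⟩

lemma isPD_X_pow (n : ℕ) : IsPD d (X ^ n) := by
  induction n with
  | zero => simpa using isPD_one
  | succ n ih => rw [pow_succ]; exact ih.mul isPD_X

lemma totalDegree_aeval_le (P : ℝ[X]) (l : MvPolynomial (Fin d) ℝ) (hl : l.totalDegree ≤ 1) :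
    (aeval l P).totalDegree ≤ P.natDegree := by
  rw [aeval_eq_sum_range]
  refine MvPolynomial.totalDegree_finsetSum_le fun i hi => ?_
  refine (MvPolynomial.totalDegree_smul_le _ _).trans ((MvPolynomial.totalDegree_pow _ _).trans ?_)
  have := Finset.mem_range.mp hi
  nlinarith

lemma exists_zonal_mvPolynomial (P : ℝ[X]) (x : Sph d) :
    ∃ Q : MvPolynomial (Fin d) ℝ, Q.totalDegree ≤ P.natDegree ∧
      ∀ z, evalPt Q z = P.eval (dp x z) := by
  let l : MvPolynomial (Fin d) ℝ :=
    ∑ i, MvPolynomial.C ((x : EuclideanSpace ℝ (Fin d)) i) * MvPolynomial.X i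
  have hl : l.totalDegree ≤ 1 := by
    refine MvPolynomial.totalDegree_finsetSum_le fun i _ => ?_
    refine (MvPolynomial.totalDegree_mul _ _).trans ?_
    simp
  refine ⟨aeval l P, totalDegree_aeval_le P l hl, fun z => ?_⟩
  have h1 : MvPolynomial.eval (fun i => (z : EuclideanSpace ℝ (Fin d)) i) l = dp x z := by
    simp only [l, map_sum, map_mul, MvPolynomial.eval_C, MvPolynomial.eval_X, dp,
      PiLp.inner_apply, RCLike.inner_apply, conj_trivial]
    exact Finset.sum_congr rfl fun i _ => by ring
  rw [evalPt, ← h1, aeval_def, hom_eval₂, eval, eval₂_eq_sum_range, eval₂_eq_sum_range]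
  exact Finset.sum_congr rfl fun i _ => by simp

/-- The Funk–Hecke formula with the sphere replaced by a design of sufficient strength. -/
lemma design_zonal (h : 2 ≤ d) {M : ℕ} {C₀ : Finset (Sph d)} (hC : IsSphDesign d M C₀)
    (P Q : ℝ[X]) (hPQ : P.natDegree + Q.natDegree ≤ M) (n : ℕ) (hn : Q.natDegree ≤ n) :
    ∃ R : ℝ[X], R.natDegree ≤ n ∧ ∀ x y : Sph d,
      ∑ z ∈ C₀, P.eval (dp x z) * Q.eval (dp y z) = C₀.card * R.eval (dp x y) := by
  obtain ⟨R, hR1, hR2⟩ := funk_hecke h P Q n hn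
  refine ⟨R, hR1, fun x y => ?_⟩
  obtain ⟨p, hp1, hp2⟩ := exists_zonal_mvPolynomial P x
  obtain ⟨q, hq1, hq2⟩ := exists_zonal_mvPolynomial Q y
  have h1 := hC.2 (p * q) ((MvPolynomial.totalDegree_mul _ _).trans (by omega))
  have h2 : ∀ z, evalPt (p * q) z = P.eval (dp x z) * Q.eval (dp y z) := fun z => by
    rw [← hp2, ← hq2]; simp [evalPt]
  simp only [h2] at h1
  have hc : (C₀.card : ℝ) ≠ 0 := by exact_mod_cast hC.1.card_ne_zero
  rw [← hR2, ← h1]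
  field_simp

lemma design_const (h : 2 ≤ d) {M : ℕ} {C₀ : Finset (Sph d)} (hC : IsSphDesign d M C₀)
    (P : ℝ[X]) (hP : P.natDegree ≤ M) :
    ∃ L : ℝ, ∀ x : Sph d, ∑ z ∈ C₀, P.eval (dp x z) = C₀.card * L := by
  obtain ⟨R, hR1, hR2⟩ := design_zonal h hC P 1 (by simpa using hP) 0 (by simp)
  rw [natDegree_le_iff_coeff_eq_zero] at hR1
  refine ⟨R.coeff 0, fun x => ?_⟩
  have hR : R = C (R.coeff 0) := eq_C_of_natDegree_le_zero (natDegree_le_iff_coeff_eq_zero.mpr hR1)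
  have := hR2 x x
  rw [hR] at this
  simpa using this

/-- The linear programming inequality. With `A`, `B` the averages of the feature vector over the
configuration and over the design, `A · A` is the energy on the right, while `A · B = B · B` is the
energy on the left, since averaging over the design gives a constant. So the claim is
`|A - B|² ≥ 0`. -/
lemma IsPD.energy_le (h : 2 ≤ d) {M : ℕ} {C₀ : Finset (Sph d)} (hC : IsSphDesign d M C₀)
    {f : ℝ[X]} (hf : IsPD d f) (hdeg : f.natDegree ≤ M) {N : ℕ} (hN : 0 < N) (x : Fin N → Sph d) :
    (1 / (C₀.card : ℝ) ^ 2) * ∑ a ∈ C₀, ∑ b ∈ C₀, f.eval (dp a b)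
      ≤ (1 / (N : ℝ) ^ 2) * ∑ i, ∑ j, f.eval (dp (x i) (x j)) := by
  obtain ⟨L, hL⟩ := design_const h hC f hdeg
  obtain ⟨ι, _, F, hF⟩ := hf
  have hc : (C₀.card : ℝ) ≠ 0 := by exact_mod_cast hC.1.card_ne_zero
  have hn : (N : ℝ) ≠ 0 := by exact_mod_cast hN.ne'
  have hLHS : (1 / (C₀.card : ℝ) ^ 2) * ∑ a ∈ C₀, ∑ b ∈ C₀, f.eval (dp a b) = L := by
    simp only [hL, Finset.sum_const, nsmul_eq_mul]; field_simp
  rw [hLHS]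
  let A : ι → ℝ := fun k => (1 / (N : ℝ)) * ∑ i, F k (x i)
  let B : ι → ℝ := fun k => (1 / (C₀.card : ℝ)) * ∑ a ∈ C₀, F k a
  have hAA : ∑ k, A k * A k = (1 / (N : ℝ) ^ 2) * ∑ i, ∑ j, f.eval (dp (x i) (x j)) := by
    have : ∑ i, ∑ j, f.eval (dp (x i) (x j)) = ∑ k, (∑ i, F k (x i)) * ∑ j, F k (x j) := by
      simp only [hF, Finset.sum_mul_sum]
      simp only [Finset.sum_comm (s := (Finset.univ : Finset (Fin N))) (t := (Finset.univ : Finset ι))]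
    rw [this, Finset.mul_sum]
    exact Finset.sum_congr rfl fun k _ => by simp only [A]; field_simp
  have hBB : ∑ k, B k * B k = L := by
    have : ∑ a ∈ C₀, ∑ b ∈ C₀, f.eval (dp a b) = ∑ k, (∑ a ∈ C₀, F k a) * ∑ b ∈ C₀, F k b := by
      simp only [hF, Finset.sum_mul_sum]
      simp only [Finset.sum_comm (s := C₀) (t := (Finset.univ : Finset ι))]
    rw [← hLHS, this, Finset.mul_sum]
    exact Finset.sum_congr rfl fun k _ => by simp only [B]; field_simp
  have hAB : ∑ k, A k * B k = L := by
    have : ∑ i, ∑ b ∈ C₀, f.eval (dp (x i) b) = ∑ k, (∑ i, F k (x i)) * ∑ b ∈ C₀, F k b := by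
      simp only [hF, Finset.sum_mul_sum]
      simp only [Finset.sum_comm (s := C₀) (t := (Finset.univ : Finset ι)),
        Finset.sum_comm (s := (Finset.univ : Finset (Fin N))) (t := (Finset.univ : Finset ι))]
    have h2 : (1 / ((N : ℝ) * C₀.card)) * ∑ i, ∑ b ∈ C₀, f.eval (dp (x i) b) = L := by
      simp only [hL, Finset.sum_const, nsmul_eq_mul, Finset.card_univ, Fintype.card_fin]; field_simp
    rw [← h2, this, Finset.mul_sum]
    exact Finset.sum_congr rfl fun k _ => by simp only [A, B]; field_simp
  have hsq : 0 ≤ ∑ k, (A k - B k) ^ 2 := Finset.sum_nonneg fun k _ => sq_nonneg _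
  have hexp : ∑ k, (A k - B k) ^ 2 = ∑ k, A k * A k - 2 * ∑ k, A k * B k + ∑ k, B k * B k := by
    rw [Finset.mul_sum, ← Finset.sum_sub_distrib, ← Finset.sum_add_distrib]
    exact Finset.sum_congr rfl fun k _ => by ring
  rw [hexp, hAB, hBB, hAA] at hsq
  linarith

/-- The polynomial `s ^ ε q(s²)`; for `ε ∈ {0, 1}` these are the polynomials with parity `ε`. -/
def lift (ε : ℕ) (q : ℝ[X]) : ℝ[X] := X ^ ε * q.comp (X ^ 2)

lemma eval_lift (ε : ℕ) (q : ℝ[X]) (s : ℝ) : (lift ε q).eval s = s ^ ε * q.eval (s ^ 2) := by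
  simp [lift]

lemma natDegree_comp_sq (q : ℝ[X]) : (q.comp (X ^ 2)).natDegree = 2 * q.natDegree := by
  rw [natDegree_comp, natDegree_X_pow, mul_comm]

lemma natDegree_lift_le (ε : ℕ) (q : ℝ[X]) : (lift ε q).natDegree ≤ 2 * q.natDegree + ε := by
  refine natDegree_mul_le.trans ?_
  rw [natDegree_X_pow, natDegree_comp_sq, add_comm]

/-- The part `lift ε r` of `R` of parity `ε`. The parity hypothesis is pointwise, as it is available
only at values of inner products. -/
lemma exists_lift_of_parity {ε : ℕ} (hε : ε < 2) (k : ℕ) (R : ℝ[X]) (hR : R.natDegree ≤ 2 * k + ε) :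
    ∃ r : ℝ[X], r.natDegree ≤ k ∧ ∀ s : ℝ, R.eval s = (-1) ^ ε * R.eval (-s) →
      R.eval s = (lift ε r).eval s := by
  refine ⟨∑ n ∈ Finset.range (2 * k + ε + 1), if n % 2 = ε then C (R.coeff n) * X ^ ((n - ε) / 2)
    else 0, ?_, fun s hs => ?_⟩
  · refine natDegree_sum_le_of_forall_le _ _ fun n hn => ?_
    have := Finset.mem_range.mp hn
    split_ifs with h
    · exact (natDegree_C_mul_X_pow_le _ _).trans (by omega)
    · simp
  · have h2 : R.eval s = (R.eval s + (-1) ^ ε * R.eval (-s)) / 2 := by linarith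
    rw [h2, eval_lift, eval_eq_sum_range' (n := 2 * k + ε + 1) (by omega),
      eval_eq_sum_range' (n := 2 * k + ε + 1) (by omega), eval_finsetSum, Finset.mul_sum,
      Finset.mul_sum, ← Finset.sum_add_distrib, Finset.sum_div]
    refine Finset.sum_congr rfl fun n hn => ?_
    rw [neg_pow s n]
    split_ifs with h
    · have h3 : ((-1 : ℝ)) ^ ε * (-1) ^ n = 1 := by
        rw [← pow_add]; exact Even.neg_one_pow (by rw [Nat.even_iff]; omega)
      have h4 : s ^ n = s ^ ε * (s ^ 2) ^ ((n - ε) / 2) := by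
        rw [← pow_mul, ← pow_add]; congr 1; omega
      simp only [eval_mul, eval_C, eval_pow, eval_X]
      rw [h4]
      linear_combination (R.coeff n * (s ^ ε * (s ^ 2) ^ ((n - ε) / 2)) / 2) * h3
    · have h3 : ((-1 : ℝ)) ^ ε * (-1) ^ n = -1 := by
        rw [← pow_add]; exact Odd.neg_one_pow (by rw [Nat.odd_iff]; omega)
      simp only [eval_zero, mul_zero]
      linear_combination (R.coeff n * s ^ n / 2) * h3

/-! ### Tight designs -/

/-- A design of strength `2t+1` with `t` inner products besides `-1` is antipodal. Otherwise the odd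
polynomial `X b(X) b(-X)`, with `b` vanishing on these `t` values, would have a nonzero sum
`∑_z f(⟨x,z⟩)`, its only nonzero term being `z = x`; but this sum is constant and odd in `x`. -/
lemma design_antipodal (h : 2 ≤ d) {t : ℕ} {C₀ : Finset (Sph d)}
    (hC : IsSphDesign d (2 * t + 1) C₀) {B : Finset ℝ} (hB : B.card = t)
    (hB1 : ∀ β ∈ B, β ≠ 1) (hB2 : ∀ β ∈ B, β ≠ -1)
    (hcov : ∀ x ∈ C₀, ∀ y ∈ C₀, x ≠ y → dp x y = -1 ∨ dp x y ∈ B) {x : Sph d} (hx : x ∈ C₀) :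
    -x ∈ C₀ := by
  by_contra hneg
  let b : ℝ[X] := ∏ β ∈ B, (X - C β)
  let f : ℝ[X] := X * b * b.comp (-X)
  have hb : b.natDegree ≤ t := by
    rw [← hB]
    refine (natDegree_prod_le _ _).trans ?_
    simp
  have hf : f.natDegree ≤ 2 * t + 1 := by
    refine natDegree_mul_le.trans ?_
    have h1 : (b.comp (-X)).natDegree ≤ b.natDegree := by
      refine natDegree_comp_le.trans ?_
      simp
    have h2 : (X * b).natDegree ≤ 1 + b.natDegree := natDegree_mul_le.trans (by simp)
    omega
  have hodd : ∀ s, f.eval (-s) = -f.eval s := fun s => by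
    simp only [f, eval_mul, eval_X, eval_comp, eval_neg, neg_neg]; ring
  obtain ⟨L, hL⟩ := design_const h hC f hf
  have h1 := hL x
  have h2 := hL (-x)
  simp only [dp_neg_left, hodd, Finset.sum_neg_distrib] at h2
  have h0 : ∑ z ∈ C₀, f.eval (dp x z) = 0 := by linarith
  have h3 : ∑ z ∈ C₀, f.eval (dp x z) = f.eval (dp x x) := by
    refine Finset.sum_eq_single_of_mem x hx fun z hz hzx => ?_
    rcases hcov x hx z hz hzx.symm with h4 | h4
    · exfalso
      apply hneg
      have : dp (-x) z = 1 := by rw [dp_neg_left, h4]; norm_num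
      rw [(dp_eq_one_iff _ _).mp this]; exact hz
    · have : b.eval (dp x z) = 0 := by
        simp only [b, eval_prod]
        exact Finset.prod_eq_zero h4 (by simp)
      simp [f, this]
  rw [h3, dp_self] at h0
  have h5 : b.eval 1 ≠ 0 := by
    simp only [b, eval_prod, Finset.prod_ne_zero_iff]
    intro β hβ
    have := hB1 β hβ
    simp only [eval_sub, eval_X, eval_C]
    exact sub_ne_zero.mpr this.symm
  have h6 : b.eval (-1) ≠ 0 := by
    simp only [b, eval_prod, Finset.prod_ne_zero_iff]
    intro β hβ
    have := hB2 β hβ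
    simp only [eval_sub, eval_X, eval_C]
    exact sub_ne_zero.mpr this.symm
  simp [f, h5, h6] at h0

/-- What is used about a tight `(2t+1)`-design `C₀`: the set `V` of squares of its inner products
in `(0,1)`, and `ε = 1` or `0` according to whether orthogonal pairs occur. -/
structure TightData (t : ℕ) (C₀ : Finset (Sph d)) (V : Finset ℝ) (ε : ℕ) : Prop where
  two_le : 2 ≤ d
  design : IsSphDesign d (2 * t + 1) C₀
  eps : ε < 2
  card : 2 * V.card + ε = t
  mem : ∀ v ∈ V, 0 < v ∧ v < 1
  attained : ∀ v ∈ V, ∃ x ∈ C₀, ∃ y ∈ C₀, dp x y ^ 2 = v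
  cover : ∀ x ∈ C₀, ∀ y ∈ C₀, dp x y ^ 2 ∈ insert 1 V ∨ (dp x y = 0 ∧ ε = 1)

/-- By antipodality the inner products other than `±1` are symmetric about `0`, so `V` consists of
the squares of the positive ones. -/
lemma exists_tightData (h : 2 ≤ d) {t : ℕ} {C₀ : Finset (Sph d)}
    (hC : IsSphDesign d (2 * t + 1) C₀) (hA : (innerProds C₀).ncard = t + 1)
    (hA1 : (-1 : ℝ) ∈ innerProds C₀) : ∃ V ε, TightData t C₀ V ε := by
  have hfin : (innerProds C₀).Finite := Set.finite_of_ncard_pos (by omega)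
  let B : Finset ℝ := hfin.toFinset.erase (-1)
  have hBmem : ∀ β, β ∈ B ↔ β ≠ -1 ∧ β ∈ innerProds C₀ := by simp [B]
  have hBcard : B.card = t := by
    have h1 : hfin.toFinset.card = t + 1 := by rw [← Set.ncard_eq_toFinset_card _ hfin, hA]
    rw [Finset.card_erase_of_mem (by simpa using hA1), h1]; rfl
  have hB1 : ∀ β ∈ B, β ≠ 1 := by
    intro β hβ
    obtain ⟨-, x, hx, y, hy, hxy, rfl⟩ := (hBmem β).mp hβ
    exact fun h => hxy ((dp_eq_one_iff x y).mp h)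
  have hcov : ∀ x ∈ C₀, ∀ y ∈ C₀, x ≠ y → dp x y = -1 ∨ dp x y ∈ B := by
    intro x hx y hy hxy
    by_cases h1 : dp x y = -1
    · exact Or.inl h1
    · exact Or.inr ((hBmem _).mpr ⟨h1, x, hx, y, hy, hxy, rfl⟩)
  have hanti : ∀ x ∈ C₀, -x ∈ C₀ := fun x hx =>
    design_antipodal h hC hBcard hB1 (fun β hβ => ((hBmem β).mp hβ).1) hcov hx
  have hBabs : ∀ β ∈ B, β ^ 2 < 1 := by
    intro β hβ
    have h1 := hB1 β hβ
    obtain ⟨h2, x, hx, y, hy, hxy, rfl⟩ := (hBmem β).mp hβ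
    refine (dp_sq_le x y).lt_of_ne fun h3 => ?_
    have h5 : (dp x y - 1) * (dp x y + 1) = 0 := by
      have h6 : dp x y ^ 2 = 1 := h3
      linear_combination h6
    rcases mul_eq_zero.mp h5 with h4 | h4
    · exact h1 (sub_eq_zero.mp h4)
    · exact h2 (eq_neg_of_add_eq_zero_left h4)
  have hsymm : ∀ β ∈ B, -β ∈ B := by
    intro β hβ
    have h1 := hB1 β hβ
    have h0 := (hBmem β).mp hβ
    obtain ⟨h2, x, hx, y, hy, hxy, rfl⟩ := h0
    refine (hBmem _).mpr ⟨fun h3 => h1 (by linarith), x, hx, -y, hanti y hy, ?_, ?_⟩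
    · intro h3
      apply h2
      have : dp x x = -dp x y := by rw [← dp_neg_right, ← h3]
      rw [dp_self] at this
      show dp x y = -1
      linarith
    · exact dp_neg_right x y
  let Bp := B.filter (0 < ·)
  let Bn := B.filter (· < 0)
  let Bz := B.filter (· = 0)
  have hpn : Bn.card = Bp.card := by
    refine Finset.card_bij (fun β _ => -β) ?_ ?_ ?_
    · intro β hβ
      simp only [Bn, Bp, Finset.mem_filter] at hβ ⊢
      exact ⟨hsymm β hβ.1, by linarith⟩
    · intro a _ b _ hab
      linarith
    · intro β hβ
      simp only [Bn, Bp, Finset.mem_filter] at hβ ⊢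
      exact ⟨-β, ⟨hsymm β hβ.1, by linarith⟩, by ring⟩
  have hsum : B.card = Bp.card + (Bn.card + Bz.card) := by
    rw [← Finset.card_filter_add_card_filter_not (s := B) (p := (0 < ·))]
    congr 1
    rw [← Finset.card_filter_add_card_filter_not (s := B.filter (¬ 0 < ·)) (p := (· < 0)),
      Finset.filter_filter, Finset.filter_filter]
    congr 2
    · ext β; simp only [Bn, Finset.mem_filter]; constructor
      · rintro ⟨h1, h2, h3⟩; exact ⟨h1, h3⟩
      · rintro ⟨h1, h3⟩; exact ⟨h1, by linarith, h3⟩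
    · ext β; simp only [Bz, Finset.mem_filter]; constructor
      · rintro ⟨h1, h2, h3⟩; exact ⟨h1, by linarith⟩
      · rintro ⟨h1, rfl⟩; exact ⟨h1, by simp, by simp⟩
  have hVcard : (Bp.image (· ^ 2)).card = Bp.card := by
    refine Finset.card_image_of_injOn fun a ha b hb hab => ?_
    simp only [Bp, Finset.coe_filter, Set.mem_ofPred_eq] at ha hb
    exact (sq_eq_sq₀ ha.2.le hb.2.le).mp hab
  have hz : Bz.card ≤ 1 := Finset.card_le_one.mpr (by
    intro a ha b hb
    simp only [Bz, Finset.mem_filter] at ha hb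
    rw [ha.2, hb.2])
  refine ⟨Bp.image (· ^ 2), Bz.card, h, hC, by omega, by omega, ?_, ?_, ?_⟩
  · intro v hv
    obtain ⟨β, hβ, rfl⟩ := Finset.mem_image.mp hv
    have hβ' := Finset.mem_filter.mp hβ
    exact ⟨pow_pos hβ'.2 2, hBabs β hβ'.1⟩
  · intro v hv
    obtain ⟨β, hβ, rfl⟩ := Finset.mem_image.mp hv
    obtain ⟨-, x, hx, y, hy, -, rfl⟩ := (hBmem β).mp (Finset.mem_filter.mp hβ).1
    exact ⟨x, hx, y, hy, rfl⟩
  · intro x hx y hy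
    by_cases hxy : x = y
    · left; rw [hxy, dp_self]; simp
    rcases hcov x hx y hy hxy with h1 | h1
    · left; rw [h1]; simp
    · rcases lt_trichotomy (dp x y) 0 with h2 | h2 | h2
      · left
        refine Finset.mem_insert_of_mem (Finset.mem_image.mpr ⟨-dp x y, ?_, by ring⟩)
        exact Finset.mem_filter.mpr ⟨hsymm _ h1, by linarith⟩
      · right
        refine ⟨h2, le_antisymm hz (Finset.card_pos.mpr ⟨0, ?_⟩)⟩
        exact Finset.mem_filter.mpr ⟨h2 ▸ h1, rfl⟩
      · left
        exact Finset.mem_insert_of_mem (Finset.mem_image.mpr ⟨dp x y,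
          Finset.mem_filter.mpr ⟨h1, h2⟩, rfl⟩)

/-- The weight `u ^ ε · #{(x, y) ∈ C₀² : ⟨x,y⟩² = u}`. -/
def wt (C₀ : Finset (Sph d)) (ε : ℕ) (u : ℝ) : ℝ :=
  ∑ x ∈ C₀, ∑ y ∈ C₀, if dp x y ^ 2 = u then u ^ ε else 0

namespace TightData

variable {t : ℕ} {C₀ : Finset (Sph d)} {V : Finset ℝ} {ε : ℕ}

lemma one_notMem (D : TightData t C₀ V ε) : (1 : ℝ) ∉ V := fun h => (D.mem 1 h).2.false

lemma wt_pos (D : TightData t C₀ V ε) : ∀ u ∈ insert 1 V, 0 < wt C₀ ε u := by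
  intro u hu
  have hu0 : 0 < u := by
    rcases Finset.mem_insert.mp hu with rfl | h
    · exact one_pos
    · exact (D.mem u h).1
  have hatt : ∃ x ∈ C₀, ∃ y ∈ C₀, dp x y ^ 2 = u := by
    rcases Finset.mem_insert.mp hu with rfl | h
    · obtain ⟨x, hx⟩ := D.design.1
      exact ⟨x, hx, x, hx, by rw [dp_self]; norm_num⟩
    · exact D.attained u h
  obtain ⟨x, hx, y, hy, hxy⟩ := hatt
  have hnn : ∀ x y : Sph d, 0 ≤ if dp x y ^ 2 = u then u ^ ε else 0 := fun x y => by
    split_ifs <;> positivity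
  refine Finset.sum_pos' (fun x _ => Finset.sum_nonneg fun y _ => hnn x y) ⟨x, hx, ?_⟩
  exact Finset.sum_pos' (fun y _ => hnn x y) ⟨y, hy, by rw [if_pos hxy]; positivity⟩

/-- The weighted form on `V ∪ {1}` is the pairing of lifts over pairs of points of the design. Pairs with
inner product `0` do not contribute, because `ε = 1` when they occur. -/
lemma ip_eq (D : TightData t C₀ V ε) (p q : ℝ[X]) :
    ip (insert 1 V) (wt C₀ ε) p q =
      ∑ x ∈ C₀, ∑ y ∈ C₀, (lift ε p).eval (dp x y) * (lift ε q).eval (dp x y) := by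
  simp only [ip, wt, Finset.sum_mul]
  rw [Finset.sum_comm]
  refine Finset.sum_congr rfl fun x hx => ?_
  rw [Finset.sum_comm]
  refine Finset.sum_congr rfl fun y hy => ?_
  simp only [ite_mul, zero_mul, Finset.sum_ite_eq, eval_lift]
  split_ifs with h1
  · rw [← pow_mul, mul_comm 2 ε, pow_mul]; ring
  · rcases D.cover x hx y hy with h2 | ⟨h2, h3⟩
    · exact absurd h2 h1
    · rw [h2, h3]; ring

/-- `design_zonal` for lifts: the resulting polynomial is again a lift, by parity in `x`. -/
lemma zonal_lift (D : TightData t C₀ V ε) (p q : ℝ[X]) (j : ℕ) (hq : q.natDegree ≤ j)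
    (hpq : p.natDegree + q.natDegree + ε ≤ t) :
    ∃ r : ℝ[X], r.natDegree ≤ j ∧ ∀ x y : Sph d,
      ∑ z ∈ C₀, (lift ε p).eval (dp x z) * (lift ε q).eval (dp y z)
        = C₀.card * (lift ε r).eval (dp x y) := by
  have hp' := natDegree_lift_le ε p
  have hq' := natDegree_lift_le ε q
  obtain ⟨R, hR1, hR2⟩ := design_zonal D.two_le D.design (lift ε p) (lift ε q) (by omega)
    (2 * j + ε) (by omega)
  obtain ⟨r, hr1, hr2⟩ := exists_lift_of_parity D.eps j R hR1
  refine ⟨r, hr1, fun x y => ?_⟩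
  rw [hR2, hr2]
  have hc : (C₀.card : ℝ) ≠ 0 := by exact_mod_cast D.design.1.card_ne_zero
  have h1 := hR2 x y
  have h2 := hR2 (-x) y
  simp only [dp_neg_left] at h2
  have h3 : ∀ s, (lift ε p).eval (-s) = (-1) ^ ε * (lift ε p).eval s := fun s => by
    rw [eval_lift, eval_lift, neg_pow s ε, neg_sq]; ring
  simp only [h3, mul_assoc, ← Finset.mul_sum] at h2
  rw [h1] at h2
  have h4 : ((-1 : ℝ)) ^ ε * (-1) ^ ε = 1 := by rw [← mul_pow]; simp
  apply mul_left_cancel₀ hc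
  linear_combination (-1) ^ ε * h2 - (C₀.card : ℝ) * R.eval (dp x y) * h4

/-- Averaging `P(⟨x,z⟩) P(⟨y,z⟩)` over `z ∈ C₀`, with `P` the lift of an orthogonal polynomial `p`,
gives the lift of some `r`. It is orthogonal to lower degrees, hence `r = b p`, and `b > 0` since
`r(1) > 0` and `p(1) ≥ 0`. So `b · lift ε p` has an explicit feature map. -/
lemma isPD_of_isOP (D : TightData t C₀ V ε) {k : ℕ} (hk : k ≤ V.card) {p : ℝ[X]}
    (hp : IsOP (insert 1 V) (wt C₀ ε) k p) : IsPD d (lift ε p) := by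
  have hcard : (insert 1 V).card = V.card + 1 := Finset.card_insert_of_notMem D.one_notMem
  have hDc := D.card
  have hc : (0 : ℝ) < C₀.card := by exact_mod_cast D.design.1.card_pos
  obtain ⟨r, hr1, hr2⟩ := D.zonal_lift p p k hp.2.1.le (by rw [hp.2.1]; omega)
  have hortho : ∀ q : ℝ[X], q.degree < k → ip (insert 1 V) (wt C₀ ε) r q = 0 := by
    intro q hq
    by_cases hq0 : q = 0
    · simp [hq0, ip]
    have hq1 : q.natDegree < k := by
      rw [degree_eq_natDegree hq0] at hq; exact_mod_cast hq
    obtain ⟨r', hr1', hr2'⟩ := D.zonal_lift p q q.natDegree le_rfl (by rw [hp.2.1]; omega)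
    have h0 : ip (insert 1 V) (wt C₀ ε) p r' = 0 := by
      refine hp.2.2 r' (degree_le_natDegree.trans_lt ?_)
      exact_mod_cast hr1'.trans_lt hq1
    have e : (C₀.card : ℝ) * ip (insert 1 V) (wt C₀ ε) r q
        = C₀.card * ip (insert 1 V) (wt C₀ ε) p r' := by
      rw [D.ip_eq, D.ip_eq, Finset.mul_sum, Finset.mul_sum]
      refine Finset.sum_congr rfl fun x hx => ?_
      rw [Finset.mul_sum, Finset.mul_sum]
      simp only [← mul_assoc, ← hr2, Finset.sum_mul]
      rw [Finset.sum_comm]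
      refine Finset.sum_congr rfl fun z hz => ?_
      have h5 := hr2' z x
      rw [dp_comm z x] at h5
      rw [mul_right_comm, ← h5, Finset.sum_mul]
      refine Finset.sum_congr rfl fun y hy => ?_
      rw [dp_comm y z]; ring
    rw [h0, mul_zero] at e
    exact (mul_eq_zero.mp e).resolve_left hc.ne'
  obtain ⟨b, hb1, -⟩ := hp.eq_smul D.wt_pos (by omega) hr1 hortho
  have hp1 : 0 ≤ p.eval 1 := hp.eval_max_nonneg D.wt_pos (M := 1) (by simp) (by
    intro u hu
    rcases Finset.mem_insert.mp hu with rfl | h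
    · exact le_rfl
    · exact (D.mem u h).2.le) (by omega)
  have hpos := hp.pos D.wt_pos (by omega)
  have hr_one : 0 < r.eval 1 := by
    rw [D.ip_eq] at hpos
    simp only [hr2, dp_self] at hpos
    simp only [eval_lift, one_pow, one_mul, Finset.sum_const, nsmul_eq_mul] at hpos
    exact pos_of_mul_pos_right (pos_of_mul_pos_right hpos hc.le) hc.le
  have hb : 0 < b := by
    rw [hb1, eval_mul, eval_C] at hr_one
    by_contra hneg
    push Not at hneg
    nlinarith
  have hPD : IsPD d (C (C₀.card * b) * lift ε p) := by
    refine ⟨C₀, inferInstance, fun z x => (lift ε p).eval (dp x z), fun x y => ?_⟩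
    rw [Finset.sum_coe_sort C₀ (fun z => (lift ε p).eval (dp x z) * (lift ε p).eval (dp y z)), hr2,
      hb1]
    simp only [eval_mul, eval_C, eval_lift]; ring
  have := hPD.smul (c := (C₀.card * b)⁻¹) (by positivity)
  rwa [← mul_assoc, ← C_mul, inv_mul_cancel₀ (by positivity), C_1, one_mul] at this

lemma isPD_initial (D : TightData t C₀ V ε) {l : List ℝ} (hl : l <+: V.sort (· ≤ ·)) :
    IsPD d (lift ε (l.map fun v => X - C v).prod) := by
  have hcard : (insert 1 V).card = V.card + 1 := Finset.card_insert_of_notMem D.one_notMem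
  have hlen : l.length ≤ V.card := by simpa using hl.length_le
  have hsorted : (V.sort (· ≤ ·)).Pairwise (· < ·) := V.sortedLT_sort.pairwise
  obtain ⟨l₂, hl₂⟩ := hl
  have hmem : ∀ v ∈ l, v ∈ V := fun v hv => by
    rw [← Finset.mem_sort (· ≤ ·), ← hl₂]; simp [hv]
  rw [← hl₂, List.pairwise_append] at hsorted
  refine cone_prod l (insert 1 V) (wt C₀ ε) D.wt_pos (fun v hv => Finset.mem_insert_of_mem (hmem v hv))
    (by omega) hsorted.1 ?_ (fun r => IsPD d (lift ε r)) ?_ ?_ ?_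
  · intro v hv u hu hul
    rcases Finset.mem_insert.mp hu with rfl | h
    · exact (D.mem v (hmem v hv)).2
    · refine hsorted.2.2 v hv u ?_
      rw [← Finset.mem_sort (· ≤ ·), ← hl₂, List.mem_append] at h
      exact h.resolve_left hul
  · intro p q hp hq
    have := hp.add hq
    rwa [lift, lift, ← mul_add, ← add_comp] at this
  · intro c p hc hp
    have := hp.smul hc
    rwa [lift, mul_left_comm, ← C_mul_comp] at this
  · intro k hk p hp
    exact D.isPD_of_isOP (by omega) hp

/-- The Hermite interpolant of `u ^ t / (u + L)` at `0` (if `ε = 1`), the points of `V` twice, and `1`. -/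
lemma exists_minorant (D : TightData t C₀ V ε) {L : ℝ} (hL : 0 < L) :
    ∃ H : ℝ[X], IsPD d (H.comp (X ^ 2)) ∧ H.natDegree ≤ t ∧
      (∀ u, 0 ≤ u → u ≤ 1 → H.eval u ≤ u ^ t / (u + L)) ∧
      (∀ x ∈ C₀, ∀ y ∈ C₀, H.eval (dp x y ^ 2) = (dp x y ^ 2) ^ t / (dp x y ^ 2 + L)) := by
  set vs := V.sort (· ≤ ·) with hvs
  have hlen : vs.length = V.card := Finset.length_sort _
  have hv0 : ∀ a ∈ vs, 0 ≤ a := fun a ha =>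
    (D.mem a ((Finset.mem_sort _).mp ha)).1.le
  set q : ℝ[X] := (vs.map fun v => X - C v).prod with hq
  have hDc := D.card
  have hdegl : ∀ l : List ℝ, (l.map fun v => (X - C v : ℝ[X])).prod.natDegree ≤ l.length := by
    intro l
    induction l with
    | nil => simp
    | cons a l ih =>
      rw [List.map_cons, List.prod_cons]
      refine natDegree_mul_le.trans ?_
      rw [natDegree_X_sub_C, List.length_cons]; omega
  let Pd0 : ℝ[X] → Prop := fun r => IsPD d (r.comp (X ^ 2)) ∧ r.natDegree ≤ t
  have hadd0 : ∀ p q, Pd0 p → Pd0 q → Pd0 (p + q) := fun p q hp hq =>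
    ⟨by rw [add_comp]; exact hp.1.add hq.1, natDegree_add_le_of_degree_le hp.2 hq.2⟩
  have hsmul0 : ∀ c p, 0 ≤ c → Pd0 p → Pd0 (C c * p) := fun c p hc hp =>
    ⟨by rw [C_mul_comp]; exact hp.1.smul hc, (natDegree_C_mul_le _ _).trans hp.2⟩
  have hadd : ∀ g p q, Pd0 (g * p) → Pd0 (g * q) → Pd0 (g * (p + q)) := fun g p q hp hq => by
    rw [mul_add]; exact hadd0 _ _ hp hq
  have hsmul : ∀ g c p, 0 ≤ c → Pd0 (g * p) → Pd0 (g * (C c * p)) := fun g c p hc hp => by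
    rw [mul_left_comm]; exact hsmul0 _ _ hc hp
  have hlift : ∀ r : ℝ[X], (X ^ ε * r).comp (X ^ 2) = X ^ ε * lift ε r := fun r => by
    simp only [lift, mul_comp, pow_comp, X_comp]; ring
  have hlift2 : ∀ r : ℝ[X], (X ^ ε * q * r).comp (X ^ 2) = lift ε q * lift ε r := fun r => by
    simp only [lift, mul_comp, pow_comp, X_comp]; ring
  have hpre1 : ∀ l', l' <+: vs → Pd0 (X ^ ε * (l'.map fun v => X - C v).prod) := by
    intro l' hl'
    refine ⟨?_, ?_⟩
    · rw [hlift]; exact (isPD_X_pow ε).mul (D.isPD_initial hl')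
    · refine natDegree_mul_le.trans ?_
      have := hdegl l'
      have := hl'.length_le
      rw [natDegree_X_pow]; omega
  have hpre2 : ∀ l', l' <+: vs → Pd0 (X ^ ε * q * (l'.map fun v => X - C v).prod) := by
    intro l' hl'
    refine ⟨?_, ?_⟩
    · rw [hlift2]; exact (D.isPD_initial (List.prefix_refl _)).mul (D.isPD_initial hl')
    · refine natDegree_mul_le.trans ?_
      have h1 := hdegl l'
      have h2 : q.natDegree ≤ vs.length := hdegl vs
      have h3 := hl'.length_le
      have h4 : (X ^ ε * q).natDegree ≤ ε + q.natDegree :=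
        natDegree_mul_le.trans (by rw [natDegree_X_pow])
      omega
  -- For `ε = 1` the node `0` splits off one factor `u`, with Newton coefficient `0`.
  have hε : ∃ (H₀ : ℝ[X]) (f₀ : ℝ → ℝ), Pd0 H₀ ∧ GCl L (V.card + vs.length) f₀ ∧
      ∀ u, 0 ≤ u → u ^ t / (u + L) = H₀.eval u + u ^ ε * f₀ u := by
    have hone : Pd0 1 := ⟨by simpa using isPD_one, by simp⟩
    have h0 := hsmul0 0 1 le_rfl hone
    have hlt := D.eps
    interval_cases ε
    · refine ⟨_, fun u => u ^ t / (u + L), h0, ?_, fun u _ => by simp⟩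
      rw [hlen, show V.card + V.card = t by omega]
      exact GCl.pow t
    · refine ⟨_, fun u => u ^ (2 * V.card) / (u + L), h0, ?_, fun u _ => ?_⟩
      · rw [hlen, ← two_mul]
        exact GCl.pow _
      · rw [← hDc]; simp; ring
  obtain ⟨H₀, f₀, hH₀, hf₀, e₀⟩ := hε
  -- The nodes `V` are used twice; then the last node `1` leaves a remainder of the sign of `1 - u`.
  obtain ⟨H₁, f₁, hH₁, hf₁, e₁⟩ := GCl.newton hL vs hf₀ hv0 (fun r => Pd0 (X ^ ε * r))
    (hadd _) (hsmul _) hpre1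
  rw [← hlen, ← zero_add vs.length] at hf₁
  obtain ⟨H₂, f₂, hH₂, hf₂, e₂⟩ := GCl.newton hL vs hf₁ hv0 (fun r => Pd0 (X ^ ε * q * r))
    (hadd _) (hsmul _) hpre2
  obtain ⟨f₃, hf₃, e₃⟩ := GCl.base_dd hL hf₂ zero_le_one
  have hfull : Pd0 (X ^ ε * q * q) := hpre2 vs (List.prefix_refl _)
  refine ⟨H₀ + X ^ ε * H₁ + X ^ ε * q * H₂ + C (f₂ 1) * (X ^ ε * q * q), ?_⟩
  have hPd := hadd0 _ _ (hadd0 _ _ (hadd0 _ _ hH₀ hH₁) hH₂)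
    (hsmul0 (f₂ 1) _ (hf₂.nonneg hL zero_le_one) hfull)
  have key : ∀ u, 0 ≤ u → u ^ t / (u + L) =
      (H₀ + X ^ ε * H₁ + X ^ ε * q * H₂ + C (f₂ 1) * (X ^ ε * q * q)).eval u
        + u ^ ε * q.eval u ^ 2 * (1 - u) * f₃ u := by
    intro u hu
    rw [e₀ u hu, e₁ u hu, e₂ u hu, e₃ u hu, ← hq]
    simp only [eval_add, eval_mul, eval_pow, eval_X, eval_C]
    ring
  refine ⟨hPd.1, hPd.2, fun u h0 h1 => ?_, fun x hx y hy => ?_⟩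
  · rw [key u h0]
    have h3 := hf₃.nonneg hL h0
    have h4 : 0 ≤ 1 - u := by linarith
    have : 0 ≤ u ^ ε * q.eval u ^ 2 * (1 - u) * f₃ u := by positivity
    linarith
  · rw [key _ (sq_nonneg _)]
    have hz : (dp x y ^ 2) ^ ε * q.eval (dp x y ^ 2) ^ 2 * (1 - dp x y ^ 2) = 0 := by
      rcases D.cover x hx y hy with h1 | ⟨h1, h2⟩
      · rcases Finset.mem_insert.mp h1 with h3 | h3
        · rw [h3]; ring
        · have h4 : q.eval (dp x y ^ 2) = 0 := by
            rw [hq, eval_list_prod, List.prod_eq_zero_iff]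
            simp only [List.map_map, List.mem_map]
            exact ⟨dp x y ^ 2, (Finset.mem_sort _).mpr h3, by simp⟩
          rw [h4]; ring
      · rw [h1, h2]; ring
    rw [hz]; ring

/-- The energy bound for the kernel `φ_L(s²)`, `φ_L(u) = u ^ t / (u + L)`. -/
lemma energy_rational (D : TightData t C₀ V ε) {L : ℝ} (hL : 0 < L) {N : ℕ} (hN : 0 < N)
    (x : Fin N → Sph d) :
    (1 / (C₀.card : ℝ) ^ 2) * ∑ a ∈ C₀, ∑ b ∈ C₀, (dp a b ^ 2) ^ t / (dp a b ^ 2 + L)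
      ≤ (1 / (N : ℝ) ^ 2) * ∑ i, ∑ j,
          (dp (x i) (x j) ^ 2) ^ t / (dp (x i) (x j) ^ 2 + L) := by
  obtain ⟨H, hPD, hdeg, hle, heq⟩ := D.exists_minorant hL
  have h1 := hPD.energy_le D.two_le D.design (by rw [natDegree_comp_sq]; omega) hN x
  simp only [eval_comp, eval_pow, eval_X] at h1
  have e1 : ∑ a ∈ C₀, ∑ b ∈ C₀, (dp a b ^ 2) ^ t / (dp a b ^ 2 + L)
      = ∑ a ∈ C₀, ∑ b ∈ C₀, H.eval (dp a b ^ 2) :=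
    Finset.sum_congr rfl fun a ha => Finset.sum_congr rfl fun b hb => (heq a ha b hb).symm
  rw [e1]
  refine h1.trans ?_
  gcongr with i _ j _
  exact hle _ (sq_nonneg _) (dp_sq_le _ _)

end TightData

/-! ### Integral representation of `|s| ^ p` -/

lemma even_rpow_eq {s p : ℝ} {m : ℕ} (hp : p = 2 * m) : |s| ^ p = s ^ (2 * m) := by
  rw [hp, show (2 * (m : ℝ)) = ((2 * m : ℕ) : ℝ) by push_cast; ring, Real.rpow_natCast,
    pow_mul, sq_abs, ← pow_mul]

/-- The integrand in the representation of `|s| ^ p`: Mathlib's integrand for `u ^ q`, `0 < q < 1`,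
at `u = s²`, times `u ^ (t - 1)`. -/
def kern (t : ℕ) (q L s : ℝ) : ℝ := Real.rpowIntegrand₀₁ q L (s ^ 2) * (s ^ 2) ^ (t - 1)

lemma kern_eq {t : ℕ} (ht : 1 ≤ t) {q : ℝ} (hq : q ∈ Set.Ioo (0 : ℝ) 1) {L : ℝ} (hL : 0 < L)
    (s : ℝ) : kern t q L s = L ^ (q - 1) * ((s ^ 2) ^ t / (s ^ 2 + L)) := by
  obtain ⟨m, rfl⟩ : ∃ m, t = m + 1 := ⟨t - 1, by omega⟩
  rw [kern, Real.rpowIntegrand₀₁_eq_pow_div hq hL.le (sq_nonneg s), Nat.add_sub_cancel, pow_succ,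
    add_comm L]
  ring

lemma integrableOn_kern (t : ℕ) {q : ℝ} (hq : q ∈ Set.Ioo (0 : ℝ) 1) (s : ℝ) :
    IntegrableOn (fun L => kern t q L s) (Set.Ioi 0) :=
  (Real.integrableOn_rpowIntegrand₀₁_Ioi hq (sq_nonneg s)).mul_const _

lemma integral_kern {t : ℕ} (ht : 1 ≤ t) {p q : ℝ} (hp : 0 < p) (hpq : p = 2 * (q + (t - 1)))
    (hq : q ∈ Set.Ioo (0 : ℝ) 1) (s : ℝ) :
    ∫ L in Set.Ioi 0, kern t q L s
      = (∫ L in Set.Ioi 0, Real.rpowIntegrand₀₁ q L 1) * |s| ^ p := by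
  simp only [kern]
  rw [integral_mul_const, Real.integral_rpowIntegrand₀₁_eq_rpow_mul_const hq (sq_nonneg s),
    mul_comm (_ ^ q), mul_assoc]
  congr 1
  have h1 : (q + ((t - 1 : ℕ) : ℝ)) ≠ 0 := by
    rw [Nat.cast_sub ht]; intro h; push_cast at h; rw [h] at hpq; linarith
  rw [← Real.rpow_natCast (s ^ 2) (t - 1), ← Real.rpow_add' (sq_nonneg s) h1, ← sq_abs,
    ← Real.rpow_natCast |s| 2, ← Real.rpow_mul (abs_nonneg s), hpq, Nat.cast_sub ht]
  push_cast; rfl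

lemma integral_double_sum {ι : Type*} (S : Finset ι) (t : ℕ) (ht : 1 ≤ t) {p q : ℝ} (hp : 0 < p)
    (hpq : p = 2 * (q + (t - 1))) (hq : q ∈ Set.Ioo (0 : ℝ) 1) (c : ℝ) (y : ι → ι → ℝ) :
    IntegrableOn (fun L => c * ∑ a ∈ S, ∑ b ∈ S, kern t q L (y a b)) (Set.Ioi 0) ∧
    ∫ L in Set.Ioi 0, c * ∑ a ∈ S, ∑ b ∈ S, kern t q L (y a b)
      = (∫ L in Set.Ioi 0, Real.rpowIntegrand₀₁ q L 1) * (c * ∑ a ∈ S, ∑ b ∈ S, |y a b| ^ p) := by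
  have hi : ∀ a b, IntegrableOn (fun L => kern t q L (y a b)) (Set.Ioi 0) := fun a b =>
    integrableOn_kern t hq _
  have hi' : ∀ a, IntegrableOn (fun L => ∑ b ∈ S, kern t q L (y a b)) (Set.Ioi 0) := fun a =>
    integrable_finsetSum _ fun b _ => hi a b
  refine ⟨(integrable_finsetSum _ fun a _ => hi' a).const_mul c, ?_⟩
  rw [integral_const_mul, integral_finsetSum _ fun a _ => hi' a, mul_left_comm]
  congr 1
  rw [Finset.mul_sum]
  refine Finset.sum_congr rfl fun a _ => ?_
  rw [integral_finsetSum _ fun b _ => hi a b, Finset.mul_sum]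
  exact Finset.sum_congr rfl fun b _ => integral_kern ht hp hpq hq _

/-- The lower bound for the `p`-frame energy, `0 < p`, `2t - 2 ≤ p ≤ 2t`. -/
lemma TightData.energy_rpow {t : ℕ} {C₀ : Finset (Sph d)} {V : Finset ℝ} {ε : ℕ}
    (D : TightData t C₀ V ε) (ht : 1 ≤ t) {p : ℝ} (hp0 : 0 < p) (hp1 : 2 * (t : ℝ) - 2 ≤ p)
    (hp2 : p ≤ 2 * (t : ℝ)) {N : ℕ} (hN : 0 < N) (x : Fin N → Sph d) :
    (1 / (C₀.card : ℝ) ^ 2) * ∑ a ∈ C₀, ∑ b ∈ C₀, |dp a b| ^ p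
      ≤ (1 / (N : ℝ) ^ 2) * ∑ i, ∑ j, |dp (x i) (x j)| ^ p := by
  have heven : ∀ m : ℕ, m ≤ t → p = 2 * m →
      (1 / (C₀.card : ℝ) ^ 2) * ∑ a ∈ C₀, ∑ b ∈ C₀, |dp a b| ^ p
        ≤ (1 / (N : ℝ) ^ 2) * ∑ i, ∑ j, |dp (x i) (x j)| ^ p := by
    intro m hm hpm
    have := (isPD_X_pow (d := d) (2 * m)).energy_le D.two_le D.design
      (by rw [natDegree_X_pow]; omega) hN x
    simpa only [even_rpow_eq hpm, eval_pow, eval_X] using this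
  rcases hp2.eq_or_lt with h2 | h2
  · exact heven t le_rfl h2
  rcases hp1.eq_or_lt with h1 | h1
  · refine heven (t - 1) (Nat.sub_le _ _) ?_
    rw [← h1, Nat.cast_sub ht]; push_cast; ring
  set q : ℝ := p / 2 - (t - 1) with hqdef
  have hpq : p = 2 * (q + (t - 1)) := by rw [hqdef]; ring
  have hq : q ∈ Set.Ioo (0 : ℝ) 1 := ⟨by linarith, by linarith⟩
  obtain ⟨iC, eC⟩ := integral_double_sum C₀ t ht hp0 hpq hq (1 / (C₀.card : ℝ) ^ 2) dp
  obtain ⟨iX, eX⟩ := integral_double_sum Finset.univ t ht hp0 hpq hq (1 / (N : ℝ) ^ 2)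
    (fun i j => dp (x i) (x j))
  refine le_of_mul_le_mul_left ?_ (Real.integral_rpowIntegrand₀₁_one_pos hq)
  rw [← eC, ← eX]
  refine setIntegral_mono_on iC iX measurableSet_Ioi fun L hL => ?_
  have hL' : 0 < L := hL
  simp only [kern_eq ht hq hL', ← Finset.mul_sum]
  rw [mul_left_comm, mul_left_comm (1 / (N : ℝ) ^ 2)]
  exact mul_le_mul_of_nonneg_left (D.energy_rational hL' hN x) (Real.rpow_nonneg hL'.le _)

/-- A sum over a configuration that runs through each point of `C₀` exactly `k` times. -/
lemma sum_repeated {C₀ : Finset (Sph d)} {k N : ℕ} {y : Fin N → Sph d}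
    (hy1 : ∀ c ∈ C₀, Set.ncard {i : Fin N | y i = c} = k)
    (hy2 : ∀ c ∉ C₀, Set.ncard {i : Fin N | y i = c} = 0) (F : Sph d → ℝ) :
    ∑ i, F (y i) = k * ∑ c ∈ C₀, F c := by
  classical
  have hmem : ∀ i ∈ Finset.univ, y i ∈ C₀ := by
    intro i _
    by_contra hi
    have h1 := (Set.ncard_eq_zero (Set.toFinite _)).mp (hy2 _ hi)
    have : i ∈ ({j : Fin N | y j = y i} : Set (Fin N)) := rfl
    rw [h1] at this
    exact this
  rw [← Finset.sum_fiberwise_of_maps_to hmem, Finset.mul_sum]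
  refine Finset.sum_congr rfl fun c hc => ?_
  rw [Finset.sum_congr rfl fun i hi => by rw [(Finset.mem_filter.mp hi).2], Finset.sum_const,
    nsmul_eq_mul]
  congr 2
  rw [← hy1 c hc, ← Set.ncard_coe_finset]
  congr 1
  ext i; simp

end helpers

open scoped Classical in
/-- If `C ⊆ S^{d-1}` is a tight spherical `(2t+1)`-design and
`2t-2 ≤ p ≤ 2t`, `p > 0`, then for `N = k·|C|` the discrete `N`-point `p`-frame energy
is bounded below by the `p`-frame energy of `C`, and this bound is attained by the
configuration consisting of the points of `C` each repeated `k` times. -/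
theorem discrete_p_frame_energy_min_repeated_tight_design
    {d t : ℕ} (hd : 2 ≤ d) (ht : 1 ≤ t) (C : Finset (Sph d))
    (hdes : IsSphDesign d (2 * t + 1) C)
    (hA : (innerProds C).ncard = t + 1) (hA1 : (-1 : ℝ) ∈ innerProds C)
    (p : ℝ) (hp0 : 0 < p) (hp1 : 2 * (t : ℝ) - 2 ≤ p) (hp2 : p ≤ 2 * (t : ℝ))
    (k N : ℕ) (hk : 1 ≤ k) (hN : N = k * C.card) :
    (∀ x : Fin N → Sph d,
      (1 / (C.card : ℝ) ^ 2) * ∑ a ∈ C, ∑ b ∈ C,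
          |⟪(a : EuclideanSpace ℝ (Fin d)), (b : EuclideanSpace ℝ (Fin d))⟫| ^ p
        ≤ (1 / (N : ℝ) ^ 2) * ∑ i, ∑ j,
            |⟪(x i : EuclideanSpace ℝ (Fin d)), (x j : EuclideanSpace ℝ (Fin d))⟫| ^ p) ∧
    (∀ y : Fin N → Sph d,
      (∀ c : Sph d, Set.ncard {i : Fin N | y i = c} = if c ∈ C then k else 0) →
      (1 / (N : ℝ) ^ 2) * ∑ i, ∑ j,
          |⟪(y i : EuclideanSpace ℝ (Fin d)), (y j : EuclideanSpace ℝ (Fin d))⟫| ^ p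
        = (1 / (C.card : ℝ) ^ 2) * ∑ a ∈ C, ∑ b ∈ C,
            |⟪(a : EuclideanSpace ℝ (Fin d)), (b : EuclideanSpace ℝ (Fin d))⟫| ^ p) := by
  obtain ⟨V, ε, D⟩ := exists_tightData hd hdes hA hA1
  have hc : 0 < C.card := hdes.1.card_pos
  have hN0 : 0 < N := hN ▸ Nat.mul_pos hk hc
  refine ⟨fun x => D.energy_rpow ht hp0 hp1 hp2 hN0 x, fun y hy => ?_⟩
  have hy1 : ∀ c ∈ C, Set.ncard {i : Fin N | y i = c} = k := fun c h => by rw [hy c, if_pos h]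
  have hy2 : ∀ c ∉ C, Set.ncard {i : Fin N | y i = c} = 0 := fun c h => by rw [hy c, if_neg h]
  have e1 : ∀ i, ∑ j, |dp (y i) (y j)| ^ p = k * ∑ b ∈ C, |dp (y i) b| ^ p := fun i =>
    sum_repeated hy1 hy2 fun b => |dp (y i) b| ^ p
  have e2 : ∑ i, ∑ b ∈ C, |dp (y i) b| ^ p = k * ∑ a ∈ C, ∑ b ∈ C, |dp a b| ^ p :=
    sum_repeated hy1 hy2 fun a => ∑ b ∈ C, |dp a b| ^ p
  have hk0 : (k : ℝ) ≠ 0 := by exact_mod_cast (by omega : k ≠ 0)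
  have hc0 : (C.card : ℝ) ≠ 0 := by exact_mod_cast hc.ne'
  simp only [e1, ← Finset.mul_sum]
  rw [e2, hN, Nat.cast_mul]
  field_simp
end
end

section
/- Let d ≥ 2 and let f : [−1,1] → ℝ be continuous. The uniform measure σ minimizes the energy I_f(μ) = ∫∫ f(⟨x,y⟩) dμ(x)dμ(y) over all Borel probability measures μ on S^{d-1} if and only if there exists a constant c ∈ ℝ such that the function t ↦ f(t) − c is positive definite on S^{d-1}. -/
/-!
By rotation invariance, the potential `x ↦ ∫ f ⟪x, y⟫ dσ(y)` is constant, equal to `I_f(σ)`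
(`potential_const`). Replacing `f` by `f - c` shifts every energy of a probability measure by `c`.

If `h = f - c` is positive definite, then `h ⟪x, y⟫ = ⟪φ x, φ y⟫` for a continuous map `φ` into a
Hilbert space, so `I_h(μ - σ) = ‖∫ φ dμ - ∫ φ dσ‖² ≥ 0`. Constancy of the potential of `σ` turns
the left side into `I_h(μ) - I_h(σ)` (`energy_min_of_posdef`).

Conversely, let `σ` be a minimizer and take `c = I_f(σ)`, so that `h = f - c` has vanishing
`σ`-potential and nonnegative energies. For a bounded density `g` and large `T`, the measure
`(T + g) σ` is positive and has the same `h`-energy as the signed measure `g σ`, which is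
therefore nonnegative (`density_energy_nonneg`). Concentrating `g` near finitely many points, with
prescribed weights, gives the positive definiteness of `h` in the limit (`kernel_sum_nonneg`).
-/

open MeasureTheory Metric
open scoped RealInnerProductSpace

noncomputable section

variable {d : ℕ}

open Filter Topology

/-! ### From nonnegative energies to positive definiteness -/

section Abstract

variable {X : Type*} [MetricSpace X] [CompactSpace X] [MeasurableSpace X] [BorelSpace X]

lemma integrable_mul_kernel {σ : Measure X} [IsFiniteMeasure σ]
    {F : X → ℝ} (hF : Continuous F) {g : X → ℝ} (hg : Measurable g) {T : ℝ}
    (hT : ∀ x, |g x| ≤ T) : Integrable (fun x => g x * F x) σ :=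
  Integrable.bdd_mul (hF.integrable_of_hasCompactSupport (HasCompactSupport.of_compactSpace F))
    hg.aestronglyMeasurable (Eventually.of_forall hT)

/-- By normalization, nonnegativity of the energy passes from probability measures to all finite
measures. -/
lemma energy_nonneg_of_finite {X : Type*} [MeasurableSpace X] {k : X → X → ℝ}
    (hE : ∀ μ : Measure X, IsProbabilityMeasure μ → 0 ≤ ∫ x, ∫ y, k x y ∂μ ∂μ)
    (ρ : Measure X) [IsFiniteMeasure ρ] : 0 ≤ ∫ x, ∫ y, k x y ∂ρ ∂ρ := by
  by_cases h0 : ρ = 0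
  · simp [h0]
  have : NeZero ρ := ⟨h0⟩
  have h := hE ((ρ Set.univ)⁻¹ • ρ) inferInstance
  simp only [integral_smul_measure, smul_eq_mul, integral_const_mul] at h
  have hp : 0 < ((ρ Set.univ)⁻¹).toReal := by
    apply ENNReal.toReal_pos
    · simp
    · simp [h0]
  rw [mul_nonneg_iff_of_pos_left hp, mul_nonneg_iff_of_pos_left hp] at h
  exact h

lemma continuous_potential {σ : Measure X} [IsFiniteMeasure σ] {k : X → X → ℝ}
    (hk : Continuous (fun p : X × X => k p.1 p.2))
    {g : X → ℝ} (hg : Measurable g) {T : ℝ} (hT : ∀ x, |g x| ≤ T) :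
    Continuous fun x => ∫ y, g y * k x y ∂σ := by
  obtain ⟨C, hC⟩ := isCompact_univ.exists_bound_of_continuousOn hk.continuousOn
  refine continuous_of_dominated (bound := fun _ => T * C) ?_ ?_ (integrable_const _) ?_
  · intro x
    exact (integrable_mul_kernel (σ := σ) (F := k x)
      (hk.comp (Continuous.prodMk_right x)) hg hT).aestronglyMeasurable
  · intro x
    refine Eventually.of_forall fun y => ?_
    rw [norm_mul]
    have h1 : ‖g y‖ ≤ T := hT y
    have h2 : ‖k x y‖ ≤ C := hC (x, y) trivial
    exact mul_le_mul h1 h2 (norm_nonneg _) ((norm_nonneg _).trans h1)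
  · refine Eventually.of_forall fun y => ?_
    exact continuous_const.mul (hk.comp (Continuous.prodMk_left y))

lemma continuous_average {σ : Measure X} [IsFiniteMeasure σ] {k : X → X → ℝ}
    (hk : Continuous (fun p : X × X => k p.1 p.2)) (B : Set X) :
    Continuous fun x => ⨍ y in B, k x y ∂σ := by
  simp only [setAverage_eq, smul_eq_mul]
  have h := continuous_potential (σ := σ.restrict B) hk (g := fun _ => 1)
    measurable_const (T := 1) (by simp)
  simp only [one_mul] at h
  exact continuous_const.mul h

/-- If all `σ`-potentials of `k` vanish, the quadratic form of `k` is nonnegative on every signed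
measure `g σ` with bounded density: the measure `(T + g) σ` is positive, and its energy equals
that of `g σ` because the cross terms are integrals of `σ`-potentials. -/
lemma density_energy_nonneg {σ : Measure X} [IsProbabilityMeasure σ] {k : X → X → ℝ}
    (hk : Continuous (fun p : X × X => k p.1 p.2)) (hsymm : ∀ x y, k x y = k y x)
    (h0 : ∀ x, ∫ y, k x y ∂σ = 0)
    (hE : ∀ μ : Measure X, IsProbabilityMeasure μ → 0 ≤ ∫ x, ∫ y, k x y ∂μ ∂μ)
    {g : X → ℝ} (hg : Measurable g) {T : ℝ} (hT : ∀ x, |g x| ≤ T) :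
    0 ≤ ∫ x, g x * ∫ y, g y * k x y ∂σ ∂σ := by
  have hkx : ∀ x, Continuous (k x) := fun x => hk.comp (Continuous.prodMk_right x)
  have hpos : ∀ x, 0 ≤ T + g x := fun x => by linarith [neg_abs_le (g x), hT x]
  have hmeas : Measurable fun x => ENNReal.ofReal (T + g x) := by fun_prop
  let ρ := σ.withDensity fun x => ENNReal.ofReal (T + g x)
  have hint : ∀ F : X → ℝ, ∫ x, F x ∂ρ = ∫ x, (T + g x) * F x ∂σ := by
    intro F
    rw [integral_withDensity_eq_integral_toReal_smul hmeas (by simp)]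
    simp [ENNReal.toReal_ofReal (hpos _)]
  have hfin : IsFiniteMeasure ρ := by
    refine isFiniteMeasure_withDensity_ofReal ?_
    refine (Integrable.add (integrable_const T) ?_).2
    exact Integrable.of_bound hg.aestronglyMeasurable T (Eventually.of_forall hT)
  have hcont := continuous_potential (σ := σ) hk hg hT
  have hconst : ∀ x : X, |T| ≤ |T| := fun _ => le_rfl
  have h := energy_nonneg_of_finite hE ρ
  have e1 : ∀ x, ∫ y, k x y ∂ρ = ∫ y, g y * k x y ∂σ := by
    intro x
    rw [hint]
    simp only [add_mul]
    rw [integral_add (integrable_mul_kernel (hkx x) measurable_const hconst)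
      (integrable_mul_kernel (hkx x) hg hT), integral_const_mul, h0]
    simp
  simp only [e1] at h
  rw [hint] at h
  simp only [add_mul] at h
  rw [integral_add (integrable_mul_kernel hcont measurable_const hconst)
      (integrable_mul_kernel hcont hg hT), integral_const_mul] at h
  have e2 : ∫ x, ∫ y, g y * k x y ∂σ ∂σ = 0 := by
    rw [integral_integral_swap]
    · have : ∀ y, ∫ x, g y * k x y ∂σ = 0 := by
        intro y
        rw [integral_const_mul]
        simp only [hsymm _ y, h0, mul_zero]
      simp [this]
    · refine integrable_mul_kernel (X := X × X) (F := fun p => k p.1 p.2)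
        (g := fun p => g p.2) hk (hg.comp measurable_snd) (fun p => hT p.2)
  rw [e2] at h
  simpa using h

lemma tendsto_double_average {σ : Measure X} [IsProbabilityMeasure σ] [σ.IsOpenPosMeasure]
    {k : X → X → ℝ} (hk : Continuous (fun p : X × X => k p.1 p.2)) (a b : X) :
    Tendsto (fun r : ℝ => ⨍ x in ball a r, ⨍ y in ball b r, k x y ∂σ ∂σ) (𝓝[>] 0)
      (𝓝 (k a b)) := by
  rw [Metric.tendsto_nhds]
  intro ε hε
  obtain ⟨δ, hδ, H⟩ := Metric.continuousAt_iff.1 (hk.continuousAt (x := (a, b))) (ε / 2) (by linarith)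
  filter_upwards [Ioo_mem_nhdsGT hδ] with r hr
  have hb : ∀ c : X, σ (ball c r) ≠ 0 := fun c => (measure_ball_pos σ c hr.1).ne'
  have key : ∀ c : X, ∀ F : X → ℝ, Continuous F →
      (∀ x ∈ ball c r, F x ∈ closedBall (k a b) (ε / 2)) →
      (⨍ x in ball c r, F x ∂σ) ∈ closedBall (k a b) (ε / 2) := by
    intro c F hF h
    refine (convex_closedBall _ _).set_average_mem isClosed_closedBall (hb c)
      (measure_ne_top _ _) ?_ ?_
    · exact ae_restrict_of_forall_mem measurableSet_ball h
    · exact (hF.integrable_of_hasCompactSupport (HasCompactSupport.of_compactSpace F)).integrableOn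
  have hcont := continuous_average (σ := σ) hk (ball b r)
  have := key a _ hcont fun x hx => key b (k x) (hk.comp (Continuous.prodMk_right x)) fun y hy => by
    refine (H (x := (x, y)) ?_).le
    rw [Prod.dist_eq]
    exact max_lt (lt_trans hx hr.2) (lt_trans hy hr.2)
  exact lt_of_le_of_lt this (by linarith)

/-- The sum is the limit, as `r → 0`, of the energies of `∑ i, a i • σ_i`, where `σ_i` is `σ`
conditioned on the ball of radius `r` about `x i`. These signed measures have bounded densities, so
`density_energy_nonneg` applies to them. -/
lemma kernel_sum_nonneg {σ : Measure X} [IsProbabilityMeasure σ] [σ.IsOpenPosMeasure]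
    {k : X → X → ℝ}
    (hk : Continuous (fun p : X × X => k p.1 p.2)) (hsymm : ∀ x y, k x y = k y x)
    (h0 : ∀ x, ∫ y, k x y ∂σ = 0)
    (hE : ∀ μ : Measure X, IsProbabilityMeasure μ → 0 ≤ ∫ x, ∫ y, k x y ∂μ ∂μ)
    {ι : Type*} [Fintype ι] (x : ι → X) (a : ι → ℝ) :
    0 ≤ ∑ i, ∑ j, a i * (a j * k (x i) (x j)) := by
  have hlim : Tendsto (fun r : ℝ => ∑ i, ∑ j,
      a i * (a j * ⨍ u in ball (x i) r, ⨍ v in ball (x j) r, k u v ∂σ ∂σ)) (𝓝[>] 0)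
      (𝓝 (∑ i, ∑ j, a i * (a j * k (x i) (x j)))) :=
    tendsto_finsetSum _ fun i _ => tendsto_finsetSum _ fun j _ =>
      ((tendsto_double_average hk _ _).const_mul _).const_mul _
  refine ge_of_tendsto hlim (Eventually.of_forall fun r => ?_)
  let g : X → ℝ := fun u => ∑ i, (ball (x i) r).indicator (fun _ => a i * (σ.real (ball (x i) r))⁻¹) u
  have hg : Measurable g :=
    Finset.measurable_sum _ fun i _ => measurable_const.indicator measurableSet_ball
  have hT : ∀ u, |g u| ≤ ∑ i, |a i * (σ.real (ball (x i) r))⁻¹| := fun u => by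
    refine (Finset.abs_sum_le_sum_abs _ _).trans (Finset.sum_le_sum fun i _ => ?_)
    by_cases h : u ∈ ball (x i) r
    · simp only [Set.indicator_of_mem h, le_refl]
    · simp only [Set.indicator_of_notMem h, abs_zero, abs_nonneg]
  have hgi : ∀ F : X → ℝ, Continuous F →
      ∫ u, g u * F u ∂σ = ∑ i, a i * ⨍ u in ball (x i) r, F u ∂σ := by
    intro F hF
    have hFi : Integrable F σ :=
      hF.integrable_of_hasCompactSupport (HasCompactSupport.of_compactSpace F)
    have : ∀ u, g u * F u = ∑ i, (ball (x i) r).indicator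
        (fun u => a i * (σ.real (ball (x i) r))⁻¹ * F u) u := by
      intro u
      rw [Finset.sum_mul]
      refine Finset.sum_congr rfl fun i _ => ?_
      by_cases h : u ∈ ball (x i) r <;> simp [Set.indicator, h]
    simp only [this]
    rw [integral_finsetSum _ fun i _ => (hFi.const_mul _).indicator measurableSet_ball]
    refine Finset.sum_congr rfl fun i _ => ?_
    rw [integral_indicator measurableSet_ball, integral_const_mul, setAverage_eq, smul_eq_mul,
      mul_assoc]
  have h := density_energy_nonneg hk hsymm h0 hE hg hT
  have hpot := continuous_potential (σ := σ) hk hg hT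
  rw [hgi _ hpot] at h
  refine h.trans_eq (Finset.sum_congr rfl fun i _ => ?_)
  rw [← Finset.mul_sum]
  congr 1
  simp only [fun u => hgi (k u) (hk.comp (Continuous.prodMk_right u))]
  simp only [setAverage_eq (μ := σ) (s := ball (x i) r), smul_eq_mul]
  rw [integral_finsetSum]
  · rw [Finset.mul_sum]
    refine Finset.sum_congr rfl fun j _ => ?_
    rw [integral_const_mul]
    ring
  · intro j _
    exact (((continuous_average hk (ball (x j) r)).integrable_of_hasCompactSupport
      (HasCompactSupport.of_compactSpace _)).const_mul _).integrableOn

end Abstract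
/-! ### Positive definite kernels as Gram kernels in a Hilbert space -/

section Hilbert

universe u

variable {X : Type u} [MetricSpace X] [CompactSpace X] [MeasurableSpace X] [BorelSpace X]

/-- Moore's theorem: the feature map is that of the reproducing kernel Hilbert space of `k`. -/
lemma exists_feature_map {X : Type u} {k : X → X → ℝ} (hsymm : ∀ x y, k x y = k y x)
    (hpd : ∀ (s : Finset X) (a : X → ℝ), 0 ≤ ∑ x ∈ s, ∑ y ∈ s, a x * a y * k x y) :
    ∃ (H : Type u) (_ : NormedAddCommGroup H) (_ : InnerProductSpace ℝ H) (_ : CompleteSpace H)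
      (φ : X → H), ∀ x y, ⟪φ x, φ y⟫ = k x y := by
  let K : Matrix X X (ℝ →L[ℝ] ℝ) := Matrix.of fun x y => k x y • (1 : ℝ →L[ℝ] ℝ)
  have hK : K.PosSemidef := by
    have htfae := (RKHS.posSemidef_tfae (K := K)).out 0 2
    refine htfae.mpr ⟨?_, fun v => ?_⟩
    · ext x y
      simp [K, Matrix.conjTranspose_apply, hsymm y x]
    · refine (hpd v.support v).trans_eq ?_
      simp only [Finsupp.sum, K, Matrix.of_apply, RCLike.re_to_real]
      refine Finset.sum_congr rfl fun x _ => Finset.sum_congr rfl fun y _ => ?_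
      simp [hsymm y x]
      ring
  have : Fact K.PosSemidef := ⟨hK⟩
  refine ⟨RKHS.OfKernel K, inferInstance, inferInstance, inferInstance,
    fun x => RKHS.kerFun (RKHS.OfKernel K) x (1 : ℝ), fun x y => ?_⟩
  rw [← RKHS.kernel_inner, RKHS.OfKernel.kernel_ofKernel]
  simp [K, hsymm y x]

/-- With `φ` a feature map of `k`, the energy of a signed measure is the squared norm of its mean
`∫ φ`; since `σ` has constant potential `c`, nonnegativity of the energy of `μ - σ` reads
`I(μ) - 2 c + c ≥ 0`. -/
lemma energy_min_of_posdef {σ μ : Measure X} [IsProbabilityMeasure σ] [IsProbabilityMeasure μ]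
    {k : X → X → ℝ}
    (hk : Continuous (fun p : X × X => k p.1 p.2)) (hsymm : ∀ x y, k x y = k y x)
    (hpd : ∀ (s : Finset X) (a : X → ℝ), 0 ≤ ∑ x ∈ s, ∑ y ∈ s, a x * a y * k x y)
    {c : ℝ} (h0 : ∀ x, ∫ y, k x y ∂σ = c) :
    c ≤ ∫ x, ∫ y, k x y ∂μ ∂μ := by
  obtain ⟨H, _, _, _, φ, hφ⟩ := exists_feature_map hsymm hpd
  have hcont : Continuous φ := by
    rw [continuous_iff_continuousAt]
    intro a
    rw [ContinuousAt, tendsto_iff_norm_sub_tendsto_zero]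
    have e : ∀ x, ‖φ x - φ a‖ = √(k x x - 2 * k x a + k a a) := by
      intro x
      rw [← hφ, ← hφ, ← hφ, real_inner_self_eq_norm_sq, real_inner_self_eq_norm_sq,
        ← norm_sub_sq_real, Real.sqrt_sq (norm_nonneg _)]
    simp only [e]
    have hc : Continuous fun x => √(k x x - 2 * k x a + k a a) := by
      have h1 : Continuous fun x => k x x := hk.comp (continuous_id.prodMk continuous_id)
      have h2 : Continuous fun x => k x a := hk.comp (Continuous.prodMk_left a)
      fun_prop
    have := hc.tendsto a
    convert this using 2
    ring_nf
    simp
  have hint : ∀ (ν : Measure X) [IsProbabilityMeasure ν], Integrable φ ν := fun ν _ =>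
    hcont.integrable_of_hasCompactSupport (HasCompactSupport.of_compactSpace φ)
  have hen : ∀ (ν τ : Measure X) [IsProbabilityMeasure ν] [IsProbabilityMeasure τ],
      ∫ x, ∫ y, k x y ∂τ ∂ν = ⟪∫ x, φ x ∂ν, ∫ y, φ y ∂τ⟫ := by
    intro ν τ _ _
    have : ∀ x, ∫ y, k x y ∂τ = ⟪∫ y, φ y ∂τ, φ x⟫ := by
      intro x
      simp only [← hφ]
      rw [integral_inner (hint τ), real_inner_comm]
    simp only [this]
    rw [integral_inner (hint ν), real_inner_comm]
  have h1 := hen μ σ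
  have h2 := hen σ σ
  simp only [h0, integral_const, probReal_univ, one_smul] at h1 h2
  rw [hen μ μ]
  have h3 := real_inner_self_nonneg (x := ∫ x, φ x ∂μ - ∫ x, φ x ∂σ)
  rw [inner_sub_left, inner_sub_right, inner_sub_right,
    real_inner_comm (∫ x, φ x ∂μ) (∫ x, φ x ∂σ)] at h3
  linarith

end Hilbert

/-! ### Rotation invariance of the uniform measure -/

section Sphere

open scoped Pointwise

/-- The self-map of the sphere induced by a linear isometry of `ℝ^d`. -/
def sphMap (U : EuclideanSpace ℝ (Fin d) ≃ₗᵢ[ℝ] EuclideanSpace ℝ (Fin d)) (x : Sph d) : Sph d :=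
  ⟨U x, by simp⟩

/-- Rotation invariance of `σ`, inherited from that of Lebesgue measure through the cones
`(0, 1) • s` that define the measure on the sphere. -/
lemma measurePreserving_sphMap
    (U : EuclideanSpace ℝ (Fin d) ≃ₗᵢ[ℝ] EuclideanSpace ℝ (Fin d)) :
    MeasurePreserving (sphMap U) (sphσ d) (sphσ d) := by
  have hc : Continuous (sphMap U) := by unfold sphMap; fun_prop
  refine MeasurePreserving.smul_measure ⟨hc.measurable, ?_⟩ _
  ext s hs
  rw [Measure.map_apply hc.measurable hs, Measure.toSphere_apply' _ hs,
    Measure.toSphere_apply' _ (hc.measurable hs)]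
  congr 1
  have hU := U.measurePreserving.measure_preimage_emb U.toHomeomorph.measurableEmbedding
    (Set.Ioo (0 : ℝ) 1 • ((↑) '' s))
  rw [← hU]
  congr 1
  ext v
  simp only [Set.mem_smul, Set.mem_image, Set.mem_preimage]
  constructor
  · rintro ⟨t, ht, _, ⟨x, hx, rfl⟩, rfl⟩
    exact ⟨t, ht, _, ⟨_, hx, rfl⟩, by simp [sphMap]⟩
  · rintro ⟨t, ht, _, ⟨x, hx, rfl⟩, h⟩
    refine ⟨t, ht, _, ⟨sphMap U.symm x, ?_, rfl⟩, ?_⟩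
    · simpa [sphMap] using hx
    · apply U.injective
      simpa [sphMap] using h

/-- The `σ`-potential of a zonal kernel is constant: a reflection carries `x` to `x'`. -/
lemma potential_const (h : ℝ → ℝ) (x x' : Sph d) :
    ∫ y : Sph d, h ⟪(x : EuclideanSpace ℝ (Fin d)), (y : EuclideanSpace ℝ (Fin d))⟫ ∂(sphσ d) =
    ∫ y : Sph d, h ⟪(x' : EuclideanSpace ℝ (Fin d)), (y : EuclideanSpace ℝ (Fin d))⟫ ∂(sphσ d) := by
  let U := (ℝ ∙ ((x : EuclideanSpace ℝ (Fin d)) - x'))ᗮ.reflection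
  have hU : U x = x' := Submodule.reflection_sub (by simp)
  have hemb : MeasurableEmbedding (sphMap U) := by
    have hc : Continuous (sphMap U) := by unfold sphMap; fun_prop
    refine hc.measurableEmbedding fun a b hab => ?_
    apply Subtype.ext
    apply U.injective
    exact congrArg Subtype.val hab
  rw [← (measurePreserving_sphMap U).integral_comp hemb
    (fun y => h ⟪(x' : EuclideanSpace ℝ (Fin d)), (y : EuclideanSpace ℝ (Fin d))⟫)]
  simp only [← hU, sphMap, LinearIsometryEquiv.inner_map_map]

end Sphere

/-- For continuous `f : [-1,1] → ℝ`, the uniform measure `σ` minimizes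
the energy `I_f` over all Borel probability measures on `S^{d-1}` if and only if `f - c`
is positive definite on `S^{d-1}` for some constant `c ∈ ℝ`. -/
theorem uniform_minimizes_iff_posdef_up_to_constant
    {d : ℕ} (hd : 2 ≤ d) (f : ℝ → ℝ) (hf : ContinuousOn f (Set.Icc (-1) 1)) :
    (∀ μ : Measure (Sph d), IsProbabilityMeasure μ → energy f (sphσ d) ≤ energy f μ)
      ↔ ∃ c : ℝ, IsPosDefOn d (fun t => f t - c) := by
  have : Nonempty (Fin d) := ⟨⟨0, by omega⟩⟩
  have hne : (volume : Measure (EuclideanSpace ℝ (Fin d))).toSphere ≠ 0 := by simp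
  have : NeZero (volume : Measure (EuclideanSpace ℝ (Fin d))).toSphere := ⟨hne⟩
  have hprob : IsProbabilityMeasure (sphσ d) := by unfold sphσ; infer_instance
  have hopen : (sphσ d).IsOpenPosMeasure := by
    refine Measure.IsOpenPosMeasure.mk fun U hU hUn => ?_
    simp only [sphσ, Measure.smul_apply, smul_eq_mul, mul_ne_zero_iff]
    exact ⟨by simp [-Measure.toSphere_apply_univ], hU.measure_ne_zero _ hUn⟩
  -- `k c` is the zonal kernel of `f - c`
  let k : ℝ → Sph d → Sph d → ℝ := fun c x y =>
    f ⟪(x : EuclideanSpace ℝ (Fin d)), (y : EuclideanSpace ℝ (Fin d))⟫ - c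
  have hk : ∀ c, Continuous (fun p : Sph d × Sph d => k c p.1 p.2) := by
    intro c
    refine Continuous.sub ?_ continuous_const
    refine hf.comp_continuous (by fun_prop) fun p => ?_
    have := abs_real_inner_le_norm (p.1 : EuclideanSpace ℝ (Fin d)) p.2
    simp only [norm_eq_of_mem_sphere, mul_one] at this
    exact abs_le.1 this
  have hsymm : ∀ c x y, k c x y = k c y x := fun c x y => by
    simp only [k, real_inner_comm]
  have hkint : ∀ (μ : Measure (Sph d)) [IsProbabilityMeasure μ] (x : Sph d), Integrable (k 0 x) μ :=
    fun μ _ x => ((hk 0).comp (Continuous.prodMk_right x)).integrable_of_hasCompactSupport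
      (HasCompactSupport.of_compactSpace _)
  have hshift : ∀ (μ : Measure (Sph d)) [IsProbabilityMeasure μ] (c : ℝ) (x : Sph d),
      ∫ y, k c x y ∂μ = ∫ y, k 0 x y ∂μ - c := by
    intro μ _ c x
    have : ∀ y, k c x y = k 0 x y - c := fun y => by simp [k]
    simp only [this]
    rw [integral_sub (hkint μ x) (integrable_const _)]
    simp
  have hen : ∀ (μ : Measure (Sph d)) [IsProbabilityMeasure μ] (c : ℝ),
      ∫ x, ∫ y, k c x y ∂μ ∂μ = energy f μ - c := by
    intro μ _ c
    simp only [hshift μ c]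
    rw [integral_sub _ (integrable_const _)]
    · simp [energy, k]
    · have := continuous_potential (σ := μ) (hk 0) (g := fun _ => 1)
        measurable_const (T := 1) (by simp)
      simp only [one_mul] at this
      exact this.integrable_of_hasCompactSupport (HasCompactSupport.of_compactSpace _)
  have hpot : ∀ c x, ∫ y, k c x y ∂(sphσ d) = energy f (sphσ d) - c := by
    intro c x
    rw [← hen (sphσ d) c]
    have : ∀ x', ∫ y, k c x' y ∂(sphσ d) = ∫ y, k c x y ∂(sphσ d) :=
      fun x' => potential_const (fun t => f t - c) x' x
    simp [this]
  constructor
  · intro hmin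
    refine ⟨energy f (sphσ d), fun N x c => ?_⟩
    -- apply the real quadratic form to the real and imaginary parts of the coefficients
    have key := kernel_sum_nonneg (hk (energy f (sphσ d))) (hsymm _)
      (fun x => by rw [hpot, sub_self])
      (fun μ hμ => by rw [hen]; linarith [hmin μ hμ]) x
    have h1 := add_nonneg (key fun i => (c i).re) (key fun i => (c i).im)
    rw [← Finset.sum_add_distrib] at h1
    rw [Complex.re_sum]
    refine h1.trans_eq (Finset.sum_congr rfl fun i _ => ?_)
    rw [Complex.re_sum, ← Finset.sum_add_distrib]
    refine Finset.sum_congr rfl fun j _ => ?_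
    simp [k, Complex.mul_re, Complex.mul_im]
    ring
  · rintro ⟨c, hc⟩ μ hμ
    have := energy_min_of_posdef (μ := μ) (hk c) (hsymm c) (fun s a => ?_) (hpot c)
    · rw [hen] at this
      linarith
    · have e := hc s.card (fun i => (s.equivFin.symm i : Sph d))
        (fun i => (a (s.equivFin.symm i) : ℂ))
      refine e.trans_eq ?_
      simp only [Complex.conj_ofReal]
      norm_cast
      rw [← Finset.sum_coe_sort s, ← s.equivFin.symm.sum_comp]
      refine Finset.sum_congr rfl fun i _ => ?_
      rw [← Finset.sum_coe_sort s, ← s.equivFin.symm.sum_comp]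
      refine Finset.sum_congr rfl fun j _ => ?_
      simp only [k]
      ring
end
end

section
/- Let d ≥ 2, let f : [−1,1] → ℝ be continuous, and let h : [−1,1] → ℝ be the restriction of a real polynomial of degree k that is positive definite on S^{d-1} and satisfies h(t) ≤ f(t) for all t ∈ [−1,1]. Suppose C ⊂ S^{d-1} is a spherical k-design such that h(t) = f(t) for every t in {⟨x,y⟩ : x,y ∈ C}. Then the uniform probability measure μ_C = (1/|C|) Σ_{x∈C} δ_x minimizes I_f over all Borel probability measures on S^{d-1}: for every Borel probability measure μ on S^{d-1}, I_f(μ) ≥ I_f(μ_C). -/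
/-!
The argument is the linear programming bound. Write `h` for the polynomial and
`c = ∫ h ⟪x, y⟫ dσ(x)`, which does not depend on `y` because `σ` is rotation invariant
(`integral_sphσ_inner_eq`). For fixed `y`, the function `x ↦ h ⟪x, y⟫` is a polynomial of total
degree at most `k`, so the design property says that its average over `C` is also `c`
(`design_sum_eq`); in particular `I_f(μ_C) = I_h(μ_C) = c`.

Since `h ≤ f`, it remains to show `c ≤ I_h(μ)`. Positive definiteness, applied to points
`x_1, …, x_N` with weight `1` together with the points of `C` with weight `-N / |C|`, gives
`N² c ≤ ∑ h ⟪x_i, x_j⟫` (`sample_bound`). Taking the expectation over independent `μ`-distributed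
`x_i` yields `N² c ≤ N h(1) + N (N - 1) I_h(μ)`, and letting `N → ∞` gives the claim.
-/

open MeasureTheory Metric
open scoped RealInnerProductSpace

noncomputable section

variable {d : ℕ}

/-- The uniform measure on the sphere is invariant under linear isometries; only a formulation
with maps of the sphere covering a linear isometry is needed. -/
lemma sphσ_map (L : EuclideanSpace ℝ (Fin d) ≃ₗᵢ[ℝ] EuclideanSpace ℝ (Fin d))
    (g : Sph d → Sph d) (hg : ∀ x, (g x : EuclideanSpace ℝ (Fin d)) = L x) :
    MeasurePreserving g (sphσ d) (sphσ d) := by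
  have hgc : Continuous g := by
    refine continuous_induced_rng.2 ?_
    have : (Subtype.val ∘ g) = fun x : Sph d => L x := funext hg
    rw [this]
    fun_prop
  have key : MeasurePreserving g ((volume : Measure (EuclideanSpace ℝ (Fin d))).toSphere)
      ((volume : Measure (EuclideanSpace ℝ (Fin d))).toSphere) := by
    refine ⟨hgc.measurable, ?_⟩
    ext s hs
    rw [Measure.map_apply hgc.measurable hs, Measure.toSphere_apply' _ hs,
      Measure.toSphere_apply' _ (hgc.measurable hs)]
    congr 1
    symm
    rw [← L.measurePreserving.measure_preimage_emb L.toHomeomorph.measurableEmbedding]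
    symm
    congr 1
    ext v
    simp only [Set.mem_smul, Set.mem_preimage, Set.mem_image]
    constructor
    · rintro ⟨r, hr, _, ⟨x, hx, rfl⟩, rfl⟩
      exact ⟨r, hr, _, ⟨g x, hx, rfl⟩, by simp [hg]⟩
    · rintro ⟨r, hr, _, ⟨x, hx, rfl⟩, h⟩
      refine ⟨r, hr, _, ⟨⟨L.symm x, by simp⟩, ?_, rfl⟩, ?_⟩
      · convert hx
        ext1
        simp [hg]
      · apply L.injective
        simpa using h
  exact key.smul_measure _

lemma integral_sphσ_inner_eq (h : ℝ → ℝ) (y z : Sph d) :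
    ∫ x : Sph d, h ⟪(x : EuclideanSpace ℝ (Fin d)), (y : EuclideanSpace ℝ (Fin d))⟫ ∂(sphσ d)
      = ∫ x : Sph d, h ⟪(x : EuclideanSpace ℝ (Fin d)), (z : EuclideanSpace ℝ (Fin d))⟫
          ∂(sphσ d) := by
  -- The reflection exchanging `y` and `z` transports one integral to the other.
  set L := Submodule.reflection
    (ℝ ∙ ((y : EuclideanSpace ℝ (Fin d)) - (z : EuclideanSpace ℝ (Fin d))))ᗮ with hL
  have hLy : L y = z := Submodule.reflection_sub (by simp)
  have hLL : ∀ v, L (L v) = v := fun v => by simp [hL]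
  let g : Sph d → Sph d := fun x => ⟨L x, by simp⟩
  have hmp : MeasurePreserving g (sphσ d) (sphσ d) := sphσ_map L g fun x => rfl
  have hgg : Function.Involutive g := fun x => Subtype.ext (hLL x)
  have hge : MeasurableEmbedding g :=
    (MeasurableEquiv.mk ⟨g, g, hgg, hgg⟩ hmp.measurable hmp.measurable).measurableEmbedding
  rw [← hmp.integral_comp hge]
  refine integral_congr_ae (Filter.Eventually.of_forall fun x => ?_)
  simp only [g]
  rw [← hLy, ← L.inner_map_map, hLL]

/-- The average of `h ⟪x, y⟫` over `x` in a design does not depend on the point `y`. -/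
lemma design_sum_eq {k : ℕ} (P : Polynomial ℝ) (hdeg : P.natDegree = k)
    (C : Finset (Sph d)) (hC : IsSphDesign d k C) :
    ∃ c : ℝ, ∀ y : Sph d,
      ∑ x ∈ C, P.eval ⟪(x : EuclideanSpace ℝ (Fin d)), (y : EuclideanSpace ℝ (Fin d))⟫
        = C.card * c := by
  obtain ⟨⟨z, hz⟩, hdes⟩ := hC
  have hcard : (C.card : ℝ) ≠ 0 := by
    exact_mod_cast (Finset.card_pos.2 ⟨z, hz⟩).ne'
  refine ⟨∫ x : Sph d, P.eval ⟪(x : EuclideanSpace ℝ (Fin d)), (z : EuclideanSpace ℝ (Fin d))⟫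
    ∂(sphσ d), fun y => ?_⟩
  rw [integral_sphσ_inner_eq (fun t => P.eval t) z y]
  -- `x ↦ ⟪x, y⟫` as a linear form, and `Q = P ∘ ℓ`.
  let ℓ : MvPolynomial (Fin d) ℝ :=
    ∑ i, MvPolynomial.C ((y : EuclideanSpace ℝ (Fin d)) i) * MvPolynomial.X i
  have hℓ : ℓ.totalDegree ≤ 1 := by
    refine MvPolynomial.totalDegree_finsetSum_le fun i _ => ?_
    refine (MvPolynomial.totalDegree_mul _ _).trans ?_
    simp
  let Q : MvPolynomial (Fin d) ℝ := Polynomial.aeval ℓ P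
  have hQ : Q.totalDegree ≤ k := by
    simp only [Q, Polynomial.aeval_eq_sum_range]
    refine MvPolynomial.totalDegree_finsetSum_le fun i hi => ?_
    refine (MvPolynomial.totalDegree_smul_le _ _).trans
      ((MvPolynomial.totalDegree_pow _ _).trans ?_)
    have : i ≤ k := by
      rw [← hdeg]
      exact Nat.lt_succ_iff.1 (Finset.mem_range.1 hi)
    nlinarith
  have hev : ∀ x : Sph d, evalPt Q x
      = P.eval ⟪(x : EuclideanSpace ℝ (Fin d)), (y : EuclideanSpace ℝ (Fin d))⟫ := by
    intro x
    have h1 : MvPolynomial.eval (fun i => (x : EuclideanSpace ℝ (Fin d)) i) ℓ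
        = ⟪(x : EuclideanSpace ℝ (Fin d)), (y : EuclideanSpace ℝ (Fin d))⟫ := by
      simp [ℓ, PiLp.inner_apply]
    simp only [evalPt, Q, Polynomial.aeval_eq_sum_range, Polynomial.eval_eq_sum_range, map_sum,
      MvPolynomial.smul_eval, map_pow, h1]
  have := hdes Q hQ
  simp only [hev] at this
  rw [← this]
  field_simp

/-- Positive definiteness with real weights and an arbitrary finite index type. -/
lemma IsPosDefOn.real_sum_nonneg {h : ℝ → ℝ} (hpd : IsPosDefOn d h) {ι : Type*} [Fintype ι]
    (x : ι → Sph d) (c : ι → ℝ) :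
    0 ≤ ∑ i, ∑ j,
      h ⟪(x i : EuclideanSpace ℝ (Fin d)), (x j : EuclideanSpace ℝ (Fin d))⟫ * c i * c j := by
  let e := (Fintype.equivFin ι).symm
  have := hpd _ (fun i => x (e i)) (fun i => (c (e i) : ℂ))
  rw [← e.sum_comp]
  simp_rw [← e.sum_comp (fun j => h ⟪(x _ : EuclideanSpace ℝ (Fin d)),
    (x j : EuclideanSpace ℝ (Fin d))⟫ * c _ * c j)]
  convert this using 1
  simp only [Complex.conj_ofReal]
  norm_cast

lemma sample_bound {h : ℝ → ℝ} (hpd : IsPosDefOn d h) (C : Finset (Sph d)) (hne : C.Nonempty)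
    {c : ℝ} (hc : ∀ y : Sph d,
      ∑ x ∈ C, h ⟪(x : EuclideanSpace ℝ (Fin d)), (y : EuclideanSpace ℝ (Fin d))⟫ = C.card * c)
    (N : ℕ) (x : Fin N → Sph d) :
    (N : ℝ) ^ 2 * c ≤
      ∑ i, ∑ j, h ⟪(x i : EuclideanSpace ℝ (Fin d)), (x j : EuclideanSpace ℝ (Fin d))⟫ := by
  have hcard : (C.card : ℝ) ≠ 0 := by exact_mod_cast hne.card_pos.ne'
  have hc1 : ∀ y : Sph d, ∑ x : C, h ⟪(x.1 : EuclideanSpace ℝ (Fin d)),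
      (y : EuclideanSpace ℝ (Fin d))⟫ = C.card * c := fun y => by
    rw [← hc y, ← Finset.sum_coe_sort C]
  have hc2 : ∀ y : Sph d, ∑ x : C, h ⟪(y : EuclideanSpace ℝ (Fin d)),
      (x.1 : EuclideanSpace ℝ (Fin d))⟫ = C.card * c := fun y => by
    rw [← hc1 y]
    simp only [real_inner_comm]
  have key := hpd.real_sum_nonneg (ι := Fin N ⊕ C) (Sum.elim x (fun y => y.1))
    (Sum.elim (fun _ => 1) (fun _ => -(N / C.card : ℝ)))
  simp only [Fintype.sum_sum_type, Sum.elim_inl, Sum.elim_inr, mul_one, ← Finset.sum_mul,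
    Finset.sum_add_distrib, hc2] at key
  rw [Finset.sum_comm (s := (Finset.univ : Finset C)) (t := (Finset.univ : Finset (Fin N)))] at key
  simp only [← Finset.sum_mul, hc1, Finset.sum_const, Finset.card_univ, Fintype.card_fin,
    Fintype.card_coe, nsmul_eq_mul] at key
  field_simp at key
  linarith

lemma continuous_inner_sph {h : ℝ → ℝ} (hh : ContinuousOn h (Set.Icc (-1) 1)) :
    Continuous fun p : Sph d × Sph d =>
      h ⟪(p.1 : EuclideanSpace ℝ (Fin d)), (p.2 : EuclideanSpace ℝ (Fin d))⟫ := by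
  refine hh.comp_continuous (by fun_prop) fun p => ?_
  have := abs_real_inner_le_norm (p.1 : EuclideanSpace ℝ (Fin d)) p.2
  simp only [norm_eq_of_mem_sphere, mul_one] at this
  exact abs_le.1 this

lemma integrable_of_continuous_compact {X : Type*} [TopologicalSpace X] [CompactSpace X]
    [MeasurableSpace X] [OpensMeasurableSpace X] {g : X → ℝ} (hg : Continuous g)
    (ν : Measure X) [IsFiniteMeasure ν] : Integrable g ν :=
  hg.integrable_of_hasCompactSupport (HasCompactSupport.of_compactSpace g)

lemma energy_eq_prod {h : ℝ → ℝ} (hh : ContinuousOn h (Set.Icc (-1) 1)) (μ : Measure (Sph d))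
    [IsProbabilityMeasure μ] :
    energy h μ = ∫ p : Sph d × Sph d,
      h ⟪(p.1 : EuclideanSpace ℝ (Fin d)), (p.2 : EuclideanSpace ℝ (Fin d))⟫ ∂(μ.prod μ) :=
  (integral_prod _ (integrable_of_continuous_compact (continuous_inner_sph hh) _)).symm

/-- Averaging the bound of `sample_bound` over independent `μ`-distributed points. -/
lemma expected_bound {h : ℝ → ℝ} (hh : ContinuousOn h (Set.Icc (-1) 1)) (μ : Measure (Sph d))
    [IsProbabilityMeasure μ] {c : ℝ} (N : ℕ)
    (hs : ∀ x : Fin N → Sph d, (N : ℝ) ^ 2 * c ≤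
      ∑ i, ∑ j, h ⟪(x i : EuclideanSpace ℝ (Fin d)), (x j : EuclideanSpace ℝ (Fin d))⟫) :
    (N : ℝ) ^ 2 * c ≤ N * h 1 + N * (N - 1) * energy h μ := by
  let ν : Measure (Fin N → Sph d) := Measure.pi fun _ => μ
  have hcont : ∀ i j, Continuous fun x : Fin N → Sph d =>
      h ⟪(x i : EuclideanSpace ℝ (Fin d)), (x j : EuclideanSpace ℝ (Fin d))⟫ := fun i j =>
    (continuous_inner_sph hh).comp
      (f := fun x : Fin N → Sph d => (x i, x j)) (by fun_prop)
  have hint : ∀ i j, Integrable (fun x : Fin N → Sph d =>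
      h ⟪(x i : EuclideanSpace ℝ (Fin d)), (x j : EuclideanSpace ℝ (Fin d))⟫) ν := fun i j =>
    integrable_of_continuous_compact (hcont i j) ν
  have hval : ∀ i j, ∫ x : Fin N → Sph d,
      h ⟪(x i : EuclideanSpace ℝ (Fin d)), (x j : EuclideanSpace ℝ (Fin d))⟫ ∂ν
        = if i = j then h 1 else energy h μ := by
    intro i j
    split_ifs with hij
    · subst hij
      simp
    · have hind : ProbabilityTheory.IndepFun (fun x : Fin N → Sph d => x i)
          (fun x : Fin N → Sph d => x j) ν :=
        (ProbabilityTheory.iIndepFun_pi (X := fun _ (s : Sph d) => s)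
          fun _ => aemeasurable_id).indepFun hij
      have hmap := hind.map_prod_eq_prod_map_map
        (measurable_pi_apply i).aemeasurable (measurable_pi_apply j).aemeasurable
      have hm : ∀ i, ν.map (fun x : Fin N → Sph d => x i) = μ := fun i =>
        (measurePreserving_eval (fun _ : Fin N => μ) i).map_eq
      rw [hm, hm] at hmap
      rw [energy_eq_prod hh, ← hmap, integral_map (by fun_prop)
        (continuous_inner_sph hh).aestronglyMeasurable]
  have hmono := integral_mono (μ := ν) (integrable_const ((N : ℝ) ^ 2 * c))
    (integrable_finsetSum _ fun i _ => integrable_finsetSum _ fun j _ => hint i j) hs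
  rw [integral_finsetSum _ fun i _ => integrable_finsetSum _ fun j _ => hint i j] at hmono
  simp_rw [integral_finsetSum _ fun j _ => hint _ j, hval] at hmono
  have hrow : ∀ i : Fin N, (∑ j : Fin N, if i = j then h 1 else energy h μ)
      = h 1 + (N - 1) * energy h μ := by
    intro i
    have : ∀ j : Fin N, (if i = j then h 1 else energy h μ)
        = (if i = j then h 1 - energy h μ else 0) + energy h μ := fun j => by
      split_ifs <;> ring
    simp_rw [this, Finset.sum_add_distrib]
    simp
    ring
  simp only [hrow, integral_const, probReal_univ, Finset.sum_const, Finset.card_univ,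
    Fintype.card_fin, nsmul_eq_mul, smul_eq_mul, one_mul] at hmono
  linarith

lemma energy_unifOn (h : ℝ → ℝ) (C : Finset (Sph d)) :
    energy h (unifOn C) = (C.card : ℝ)⁻¹ * ∑ x ∈ C, (C.card : ℝ)⁻¹ * ∑ y ∈ C,
      h ⟪(x : EuclideanSpace ℝ (Fin d)), (y : EuclideanSpace ℝ (Fin d))⟫ := by
  have hI : ∀ g : Sph d → ℝ, ∫ x, g x ∂(unifOn C) = (C.card : ℝ)⁻¹ * ∑ x ∈ C, g x := by
    intro g
    rw [unifOn, integral_smul_measure, integral_finsetSum_measure fun x _ =>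
      integrable_dirac (by simp)]
    simp
  simp only [energy, hI]

/-- linear programming bound, part (ii). If `h` is the restriction of
a polynomial of degree `k` which is positive definite on `S^{d-1}` and satisfies `h ≤ f`
on `[-1,1]`, and `C` is a spherical `k`-design on whose inner products `h` agrees with
`f`, then the uniform measure on `C` minimizes `I_f` over all Borel probability
measures on `S^{d-1}`. -/
theorem lp_bound_design_interpolant_minimizes
    {d k : ℕ} (hd : 2 ≤ d) (f : ℝ → ℝ) (hf : ContinuousOn f (Set.Icc (-1) 1))
    (P : Polynomial ℝ) (hdeg : P.natDegree = k)
    (hpd : IsPosDefOn d (fun t => P.eval t))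
    (hle : ∀ t ∈ Set.Icc (-1 : ℝ) 1, P.eval t ≤ f t)
    (C : Finset (Sph d)) (hC : IsSphDesign d k C)
    (hinterp : ∀ x ∈ C, ∀ y ∈ C,
      P.eval ⟪(x : EuclideanSpace ℝ (Fin d)), (y : EuclideanSpace ℝ (Fin d))⟫
        = f ⟪(x : EuclideanSpace ℝ (Fin d)), (y : EuclideanSpace ℝ (Fin d))⟫)
    (μ : Measure (Sph d)) [IsProbabilityMeasure μ] :
    energy f (unifOn C) ≤ energy f μ := by
  obtain ⟨c, hc⟩ := design_sum_eq P hdeg C hC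
  have hne := hC.1
  have hcard : (C.card : ℝ) ≠ 0 := by exact_mod_cast hne.card_pos.ne'
  have hPc : ContinuousOn (fun t => P.eval t) (Set.Icc (-1 : ℝ) 1) := P.continuous.continuousOn
  have hEC : energy f (unifOn C) = c := by
    rw [energy_unifOn]
    have : ∀ x ∈ C, (C.card : ℝ)⁻¹ * ∑ y ∈ C,
        f ⟪(x : EuclideanSpace ℝ (Fin d)), (y : EuclideanSpace ℝ (Fin d))⟫ = c := by
      intro x hx
      rw [← Finset.sum_congr rfl fun y hy => hinterp x hx y hy]
      simp_rw [real_inner_comm _ (x : EuclideanSpace ℝ (Fin d))] at *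
      rw [hc x]
      field_simp
    rw [Finset.sum_congr rfl this]
    simp
    field_simp
  have hmono : energy (fun t => P.eval t) μ ≤ energy f μ := by
    rw [energy_eq_prod hf, energy_eq_prod hPc]
    refine integral_mono (integrable_of_continuous_compact (continuous_inner_sph hPc) _)
      (integrable_of_continuous_compact (continuous_inner_sph hf) _) fun p => hle _ ?_
    have := abs_real_inner_le_norm (p.1 : EuclideanSpace ℝ (Fin d)) p.2
    simp only [norm_eq_of_mem_sphere, mul_one] at this
    exact abs_le.1 this
  rw [hEC]
  refine le_trans ?_ hmono
  have hb := fun N => expected_bound hPc μ N (sample_bound hpd C hne hc N)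
  set E := energy (fun t => P.eval t) μ
  by_contra! hlt
  -- `N (c - E) ≤ h(1) - E` for every positive `N`, which fails for large `N` if `E < c`.
  obtain ⟨N, hN⟩ := exists_nat_gt ((P.eval 1 - E) / (c - E))
  rw [div_lt_iff₀ (sub_pos.2 hlt)] at hN
  have h1 := hb (N + 1)
  push_cast at h1
  have hpos : (0 : ℝ) < (N : ℝ) + 1 := by positivity
  have h2 : ((N : ℝ) + 1) * (((N : ℝ) + 1) * (c - E)) ≤ ((N : ℝ) + 1) * (P.eval 1 - E) := by
    linarith
  have h3 := le_of_mul_le_mul_left h2 hpos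
  linarith
end
end

section
/- Let d ≥ 2 and n ≥ 0, and let Q be the monic real polynomial of degree n that satisfies ∫_{−1}^{1} Q(t) t^j (1−t²)^{(d−1)/2} dt = 0 for all integers 0 ≤ j < n. Then the polynomial t ↦ (t+1) Q(t) is positive definite on S^{d-1}. -/
/-!
The weight `(1 - t²) ^ ((d - 1) / 2)` is the one of zonal harmonics on the unit sphere of
`ℝ^(d+2)`, so `Q` is, up to scaling, the zonal polynomial of degree `n` there; it is therefore
positive definite on that sphere and on its equatorial subsphere `S^{d-1}`. Multiplying by
`t + 1`, which is itself positive definite, preserves this (Schur product).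

Orthogonality gives the Gegenbauer equation for `Q`, that is, a two-step recursion on its
coefficients (`coeff_rec`). The recursion forces `Q` to have the parity of `n`, so `Q(⟨X, y⟩)`
has a homogenization `zonal` by powers of `|X|²`, and it says that this homogenization is
harmonic in `d + 2` variables (`lapl_zonal`). In the Fischer inner product, multiplication by
`|X|²` is adjoint to the Laplacian and `⟨·, x⟩ ^ n / n!` is the evaluation functional at `x` on
forms of degree `n`. Hence the Fischer product of the zonal harmonics with poles `x` and `y`
equals `n! Q(⟨x, y⟩)`, and the kernel is a Gram matrix (`zonal_posdef`).
-/

open MeasureTheory Metric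
open scoped RealInnerProductSpace

noncomputable section

variable {d : ℕ}

/-! ### The Gegenbauer equation from orthogonality -/

open Polynomial in
/-- The Gegenbauer operator `p ↦ (1 - t²) p'' - (d + 1) t p'`, symmetric for the weight
`(1 - t²) ^ ((d - 1) / 2)` on `[-1, 1]`. -/
def gegOp (d : ℕ) (p : Polynomial ℝ) : Polynomial ℝ :=
  (1 - X ^ 2) * derivative (derivative p) - C ((d : ℝ) + 1) * (X * derivative p)

open Polynomial in
theorem gegOp_coeff (d : ℕ) (p : Polynomial ℝ) (k : ℕ) :
    (gegOp d p).coeff k =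
      ((k : ℝ) + 2) * (k + 1) * p.coeff (k + 2) - k * (k + d) * p.coeff k := by
  rw [gegOp, sub_mul, one_mul, coeff_sub, coeff_sub, coeff_C_mul]
  rcases k with _ | _ | k
  · simp [coeff_derivative, one_add_one_eq_two]
    ring
  · simp [coeff_derivative, coeff_X_pow_mul', coeff_X_mul]
    ring
  · simp [coeff_derivative, coeff_X_pow_mul', coeff_X_mul]
    ring

/-- The Jacobi weight `(1 - t²) ^ ((d - 1) / 2)`. -/
def jacW (d : ℕ) (t : ℝ) : ℝ := (1 - t ^ 2) ^ (((d : ℝ) - 1) / 2)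

theorem jacW_continuous {d : ℕ} (hd : 2 ≤ d) : Continuous (jacW d) := by
  have h : (2 : ℝ) ≤ d := by exact_mod_cast hd
  unfold jacW
  exact Continuous.rpow_const (by fun_prop) (fun t => Or.inr (by linarith))

/-- The derivative holds on all of `ℝ`, endpoints included, because the exponent is at least `1`. -/
theorem hasDerivAt_jacV {d : ℕ} (hd : 2 ≤ d) (t : ℝ) :
    HasDerivAt (fun t : ℝ => (1 - t ^ 2) ^ (((d : ℝ) + 1) / 2))
      (-((d : ℝ) + 1) * t * jacW d t) t := by
  have h : (2 : ℝ) ≤ d := by exact_mod_cast hd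
  have h1 : HasDerivAt (fun t : ℝ => 1 - t ^ 2) (-(2 * t)) t := by
    simpa using ((hasDerivAt_id t).pow 2).const_sub 1
  have h2 := h1.rpow_const (p := ((d : ℝ) + 1) / 2) (Or.inr (by linarith))
  convert h2 using 1
  unfold jacW
  rw [show ((d : ℝ) + 1) / 2 - 1 = ((d : ℝ) - 1) / 2 by ring]
  ring

theorem jacV_eq {d : ℕ} (hd : 2 ≤ d) {t : ℝ} (ht : 0 ≤ 1 - t ^ 2) :
    (1 - t ^ 2) ^ (((d : ℝ) + 1) / 2) = (1 - t ^ 2) * jacW d t := by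
  have h : (2 : ℝ) ≤ d := by exact_mod_cast hd
  unfold jacW
  rw [show ((d : ℝ) + 1) / 2 = 1 + ((d : ℝ) - 1) / 2 by ring,
    Real.rpow_add' ht (by linarith), Real.rpow_one]

/-- Symmetry of `gegOp`: the integrand is the derivative of
`(1 - t²) ^ ((d + 1) / 2) * (p' q - p q')`, which vanishes at `±1`. -/
theorem integral_gegOp_symm {d : ℕ} (hd : 2 ≤ d) (p q : Polynomial ℝ) :
    ∫ t in (-1 : ℝ)..1, ((gegOp d p).eval t * q.eval t - p.eval t * (gegOp d q).eval t)
      * jacW d t = 0 := by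
  have h : (2 : ℝ) ≤ d := by exact_mod_cast hd
  have hder : ∀ t ∈ Set.uIcc (-1 : ℝ) 1,
      HasDerivAt (fun t : ℝ => (1 - t ^ 2) ^ (((d : ℝ) + 1) / 2) *
        (p.derivative.eval t * q.eval t - p.eval t * q.derivative.eval t))
      (((gegOp d p).eval t * q.eval t - p.eval t * (gegOp d q).eval t) * jacW d t) t := by
    intro t ht
    rw [Set.uIcc_of_le (by norm_num)] at ht
    have h0 : 0 ≤ 1 - t ^ 2 := by nlinarith [ht.1, ht.2]
    have := (hasDerivAt_jacV hd t).mul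
      (((p.derivative.hasDerivAt t).mul (q.hasDerivAt t)).sub
        ((p.hasDerivAt t).mul (q.derivative.hasDerivAt t)))
    refine this.congr_deriv ?_
    simp only [Pi.mul_apply, Pi.sub_apply]
    rw [jacV_eq hd h0]
    simp [gegOp]
    ring
  rw [intervalIntegral.integral_eq_sub_of_hasDerivAt hder]
  · have : ((d : ℝ) + 1) / 2 ≠ 0 := by linarith
    simp [Real.zero_rpow this]
  · have := jacW_continuous hd
    exact Continuous.intervalIntegrable (by fun_prop) _ _

theorem orth_lower {d n : ℕ} (hd : 2 ≤ d) (Q : Polynomial ℝ)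
    (horth : ∀ j < n, ∫ t in (-1 : ℝ)..1, Q.eval t * t ^ j * jacW d t = 0)
    (p : Polynomial ℝ) (hp : ∀ k, n ≤ k → p.coeff k = 0) :
    ∫ t in (-1 : ℝ)..1, Q.eval t * p.eval t * jacW d t = 0 := by
  have hw := jacW_continuous hd
  have hev : ∀ t, p.eval t = ∑ j ∈ Finset.range n, p.coeff j * t ^ j := by
    intro t
    rcases Nat.eq_zero_or_pos n with h0 | h0
    · have : p = 0 := Polynomial.ext fun k => by simpa using hp k (by omega)
      simp [this]
    · refine Polynomial.eval_eq_sum_range' ?_ t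
      by_contra hc
      have h1 := hp p.natDegree (by omega)
      rw [Polynomial.coeff_natDegree, Polynomial.leadingCoeff_eq_zero] at h1
      simp [h1] at hc
      omega
  simp_rw [hev, Finset.mul_sum, Finset.sum_mul]
  rw [intervalIntegral.integral_finsetSum
    (fun i _ => Continuous.intervalIntegrable (by fun_prop) _ _)]
  refine Finset.sum_eq_zero fun j hj => ?_
  rw [← mul_zero (p.coeff j), ← horth j (Finset.mem_range.1 hj),
    ← intervalIntegral.integral_const_mul]
  congr 1
  ext t
  ring

theorem eq_zero_of_integral_sq {d : ℕ} (hd : 2 ≤ d) (E : Polynomial ℝ)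
    (hE : ∫ t in (-1 : ℝ)..1, E.eval t * E.eval t * jacW d t = 0) : E = 0 := by
  have hw := jacW_continuous hd
  by_contra hne
  obtain ⟨s, hs, hs0⟩ : ∃ s ∈ Set.Ioo (-1 : ℝ) 1, E.eval s ≠ 0 := by
    by_contra! hc
    exact hne (Polynomial.eq_zero_of_infinite_isRoot E
      ((Set.Ioo_infinite (by norm_num : (-1 : ℝ) < 1)).mono hc))
  have := intervalIntegral.integral_pos (a := (-1 : ℝ)) (b := 1)
    (f := fun t => E.eval t * E.eval t * jacW d t) (by norm_num)
    (Continuous.continuousOn (by fun_prop))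
    (fun t ht => mul_nonneg (mul_self_nonneg _)
      (Real.rpow_nonneg (by nlinarith [ht.1, ht.2]) _))
    ⟨s, ⟨hs.1.le, hs.2.le⟩, mul_pos (mul_self_pos.2 hs0)
      (Real.rpow_pos_of_pos (by nlinarith [hs.1, hs.2]) _)⟩
  exact this.ne' hE

/-- The coefficients of `Q` satisfy the recursion of the Gegenbauer equation
`(1 - t²) Q'' - (d + 1) t Q' + n (n + d) Q = 0`. The left side `E` has degree below `n`, and by
symmetry of `gegOp` it is orthogonal to all polynomials of degree below `n`, hence to itself. -/
theorem coeff_rec {d n : ℕ} (hd : 2 ≤ d) (Q : Polynomial ℝ)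
    (hdeg : Q.natDegree = n)
    (horth : ∀ j < n, ∫ t in (-1 : ℝ)..1, Q.eval t * t ^ j * jacW d t = 0) (k : ℕ) :
    ((k : ℝ) + 2) * (k + 1) * Q.coeff (k + 2) + (n - k) * (n + k + d) * Q.coeff k = 0 := by
  have hw := jacW_continuous hd
  set E := gegOp d Q + Polynomial.C ((n : ℝ) * (n + d)) * Q with hEdef
  have hcoeff : ∀ k, E.coeff k = ((k : ℝ) + 2) * (k + 1) * Q.coeff (k + 2)
      + (n - k) * (n + k + d) * Q.coeff k := by
    intro k
    rw [hEdef, Polynomial.coeff_add, gegOp_coeff, Polynomial.coeff_C_mul]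
    ring
  have hQ : ∀ k, n < k → Q.coeff k = 0 := fun k hk =>
    Polynomial.coeff_eq_zero_of_natDegree_lt (by omega)
  have hElow : ∀ k, n ≤ k → E.coeff k = 0 := by
    intro k hk
    rw [hcoeff, hQ (k + 2) (by omega)]
    rcases hk.eq_or_lt with h | h
    · simp [h]
    · simp [hQ k h]
  have hLE : ∀ k, n ≤ k → (gegOp d E).coeff k = 0 := by
    intro k hk
    rw [gegOp_coeff, hElow _ hk, hElow _ (by omega)]
    ring
  have hE0 : E = 0 := by
    apply eq_zero_of_integral_sq hd
    have h1 := integral_gegOp_symm hd Q E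
    have h2 := orth_lower hd Q horth E hElow
    have h3 := orth_lower hd Q horth _ hLE
    have key : ∀ t, E.eval t * E.eval t * jacW d t =
        ((gegOp d Q).eval t * E.eval t - Q.eval t * (gegOp d E).eval t) * jacW d t
        + (Q.eval t * (gegOp d E).eval t * jacW d t
          + ((n : ℝ) * (n + d)) * (Q.eval t * E.eval t * jacW d t)) := by
      intro t
      have : E.eval t = (gegOp d Q).eval t + (n : ℝ) * (n + d) * Q.eval t := by
        simp [hEdef]
      linear_combination (E.eval t * jacW d t) * this
    simp_rw [key]
    rw [intervalIntegral.integral_add, intervalIntegral.integral_add,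
      intervalIntegral.integral_const_mul, h1, h2, h3]
    · simp
    all_goals exact Continuous.intervalIntegrable (by fun_prop) _ _
  rw [← hcoeff, hE0, Polynomial.coeff_zero]

/-- The recursion run downwards from `Q.coeff (n + 1) = 0` kills the coefficients whose index has
the parity opposite to `n`. -/
theorem coeff_odd {d n : ℕ} (Q : Polynomial ℝ) (hdeg : Q.natDegree = n)
    (hrec : ∀ k : ℕ, ((k : ℝ) + 2) * (k + 1) * Q.coeff (k + 2)
      + (n - k) * (n + k + d) * Q.coeff k = 0) (j k : ℕ) (h : k + (2 * j + 1) = n) :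
    Q.coeff k = 0 := by
  have h2 : Q.coeff (k + 2) = 0 := by
    cases j with
    | zero => exact Polynomial.coeff_eq_zero_of_natDegree_lt (by omega)
    | succ j => exact coeff_odd Q hdeg hrec j (k + 2) (by omega)
  have h3 := hrec k
  have h4 : (n : ℝ) = k + (2 * j + 1) := by exact_mod_cast h.symm
  rw [h2, mul_zero, zero_add] at h3
  refine (mul_eq_zero.1 h3).resolve_left (ne_of_gt (mul_pos ?_ ?_)) <;> rw [h4]
  · rw [add_sub_cancel_left]; positivity
  · positivity

theorem eval_eq_even {d n : ℕ} (Q : Polynomial ℝ) (hdeg : Q.natDegree = n)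
    (hrec : ∀ k : ℕ, ((k : ℝ) + 2) * (k + 1) * Q.coeff (k + 2)
      + (n - k) * (n + k + d) * Q.coeff k = 0) (t : ℝ) :
    Q.eval t = ∑ m ∈ Finset.range (n / 2 + 1), Q.coeff (n - 2 * m) * t ^ (n - 2 * m) := by
  rw [Polynomial.eval_eq_sum_range, hdeg]
  symm
  refine Finset.sum_of_injOn (fun m => n - 2 * m) ?_ ?_ ?_ ?_
  · intro a ha b hb hab
    simp at ha hb hab
    omega
  · intro a ha
    simp
  · intro k hk hk'
    have : ∃ j, k + (2 * j + 1) = n := by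
      simp at hk hk'
      by_contra! hc
      have h1 := hk' ((n - k) / 2)
      have h2 := hc ((n - k) / 2)
      omega
    obtain ⟨j, hj⟩ := this
    rw [coeff_odd Q hdeg hrec j k hj, zero_mul]
  · intros; rfl

/-! ### The Fischer inner product and zonal harmonics -/

section Fischer
open MvPolynomial
open scoped Nat

variable {ι : Type*} [Fintype ι]

/-- The Fischer bilinear form `∑ α, α! p_α q_α` on real polynomials. -/
def fischer : MvPolynomial ι ℝ →ₗ[ℝ] MvPolynomial ι ℝ →ₗ[ℝ] ℝ :=
  (basisMonomials ι ℝ).constr ℝ fun α => ((∏ i, (α i)! : ℕ) : ℝ) • lcoeff ℝ α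

theorem fischer_monomial (α : ι →₀ ℕ) (a : ℝ) (q : MvPolynomial ι ℝ) :
    fischer (monomial α a) q = a * ((∏ i, (α i)! : ℕ) : ℝ) * q.coeff α := by
  have h : monomial α a = a • basisMonomials ι ℝ α := by
    simp [coe_basisMonomials, smul_monomial]
  rw [h, map_smul, fischer, Module.Basis.constr_basis]
  simp [lcoeff, mul_assoc]

theorem fischer_self_nonneg (p : MvPolynomial ι ℝ) : 0 ≤ fischer p p := by
  have h : fischer p p = ∑ α ∈ p.support, fischer (monomial α (p.coeff α)) p := by
    conv_lhs => enter [1]; rw [p.as_sum]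
    rw [map_sum, LinearMap.sum_apply]
  rw [h]
  refine Finset.sum_nonneg fun α _ => ?_
  rw [fischer_monomial, mul_right_comm]
  exact mul_nonneg (mul_self_nonneg _) (Nat.cast_nonneg _)

/-- Multiplication by a variable is adjoint to the partial derivative. -/
theorem fischer_X_mul (i : ι) (p q : MvPolynomial ι ℝ) :
    fischer (X i * p) q = fischer p (pderiv i q) := by
  classical
  induction p using MvPolynomial.induction_on' with
  | monomial α a =>
    rw [mul_comm, X, monomial_mul, mul_one, fischer_monomial, fischer_monomial, coeff_pderiv]
    have h : ∏ j, ((α + Finsupp.single i 1 : ι →₀ ℕ) j)! = (α i + 1) * ∏ j, (α j)! := by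
      rw [← Finset.mul_prod_erase _ _ (Finset.mem_univ i),
        ← Finset.mul_prod_erase Finset.univ (fun j => (α j)!) (Finset.mem_univ i)]
      have : ∀ j ∈ Finset.univ.erase i, ((α + Finsupp.single i 1 : ι →₀ ℕ) j)! = (α j)! := by
        intro j hj
        simp [(Finset.ne_of_mem_erase hj).symm]
      rw [Finset.prod_congr rfl this]
      simp [Nat.factorial_succ, mul_assoc]
    rw [h]
    push_cast
    ring
  | add p₁ p₂ h₁ h₂ => rw [mul_add, map_add, map_add, LinearMap.add_apply, LinearMap.add_apply, h₁, h₂]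

/-- The linear form `X ↦ ⟨X, y⟩`. -/
def linForm (y : ι → ℝ) : MvPolynomial ι ℝ := ∑ i, C (y i) * X i

/-- The squared norm `∑ i, X i ^ 2`. -/
def sqForm : MvPolynomial ι ℝ := ∑ i, X i ^ 2

/-- The Laplacian of a polynomial. -/
def lapl (q : MvPolynomial ι ℝ) : MvPolynomial ι ℝ := ∑ i, pderiv i (pderiv i q)

theorem fischer_linForm_mul (x : ι → ℝ) (p q : MvPolynomial ι ℝ) :
    fischer (linForm x * p) q = ∑ i, x i * fischer p (pderiv i q) := by
  rw [linForm, Finset.sum_mul, map_sum, LinearMap.sum_apply]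
  refine Finset.sum_congr rfl fun i _ => ?_
  rw [mul_assoc, C_mul', map_smul, LinearMap.smul_apply, fischer_X_mul, smul_eq_mul]

theorem fischer_sqForm_mul (p q : MvPolynomial ι ℝ) :
    fischer (sqForm * p) q = fischer p (lapl q) := by
  rw [sqForm, lapl, Finset.sum_mul, map_sum, LinearMap.sum_apply, map_sum]
  refine Finset.sum_congr rfl fun i _ => ?_
  rw [pow_two, mul_assoc, fischer_X_mul, fischer_X_mul]

/-- `⟨·, x⟩ ^ n / n!` reproduces evaluation at `x` on homogeneous polynomials of degree `n`;
the induction step is Euler's identity. -/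
theorem fischer_linForm_pow (x : ι → ℝ) (n : ℕ) (q : MvPolynomial ι ℝ)
    (hq : q.IsHomogeneous n) : fischer (linForm x ^ n) q = (n ! : ℝ) * eval x q := by
  induction n generalizing q with
  | zero =>
    have h1 : q = C (q.coeff 0) :=
      totalDegree_eq_zero_iff_eq_C.1 (Nat.le_zero.1 hq.totalDegree_le)
    rw [pow_zero, ← C_1, ← monomial_zero', fischer_monomial, h1]
    simp
  | succ n ih =>
    have h2 := congrArg (eval x) hq.sum_X_mul_pderiv
    simp only [map_sum, map_mul, eval_X, nsmul_eq_mul, map_natCast] at h2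
    rw [pow_succ', fischer_linForm_mul, Nat.factorial_succ]
    push_cast at h2 ⊢
    rw [mul_comm ((n : ℝ) + 1), mul_assoc, ← h2, Finset.mul_sum]
    refine Finset.sum_congr rfl fun i _ => ?_
    rw [ih _ (hq.pderiv)]
    ring

theorem pderiv_linForm (y : ι → ℝ) (i : ι) : pderiv i (linForm y) = C (y i) := by
  classical
  simp [linForm, pderiv_X, Pi.single_apply]

theorem pderiv_sqForm (i : ι) : pderiv i (sqForm : MvPolynomial ι ℝ) = 2 * X i := by
  classical
  simp [sqForm, pderiv_X, Pi.single_apply]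

/-- The truncated subtractions are harmless: each occurs with a coefficient or power that makes
the term correct for `k ≤ 1` and `m ≤ 1` as well. -/
theorem lapl_pow_mul_pow (y : ι → ℝ) (hy : ∑ i, y i ^ 2 = 1) (k m : ℕ) :
    lapl (linForm y ^ k * sqForm ^ m) =
      ((k * (k - 1 : ℕ) : ℕ) : MvPolynomial ι ℝ) * (linForm y ^ (k - 1 - 1) * sqForm ^ m)
      + ((m * (2 * Fintype.card ι + 4 * (m - 1 : ℕ) + 4 * k) : ℕ) : MvPolynomial ι ℝ)
        * (linForm y ^ k * sqForm ^ (m - 1)) := by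
  have h1 : ∑ i, (C (y i) : MvPolynomial ι ℝ) ^ 2 = 1 := by
    simp_rw [← C_pow, ← map_sum, hy, C_1]
  have hi : ∀ i, pderiv i (pderiv i (linForm y ^ k * sqForm ^ m)) =
      ((k * (k - 1 : ℕ) : ℕ) : MvPolynomial ι ℝ) * (linForm y ^ (k - 1 - 1) * sqForm ^ m)
        * C (y i) ^ 2
      + 4 * (k : MvPolynomial ι ℝ) * (m : MvPolynomial ι ℝ) * linForm y ^ (k - 1) * sqForm ^ (m - 1) * (C (y i) * X i)
      + linForm y ^ k * (4 * ((m * (m - 1 : ℕ) : ℕ) : MvPolynomial ι ℝ) * sqForm ^ (m - 1 - 1))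
        * X i ^ 2
      + 2 * (m : MvPolynomial ι ℝ) * linForm y ^ k * sqForm ^ (m - 1) := by
    intro i
    have h2 : pderiv i (2 : MvPolynomial ι ℝ) = 0 := by
      exact_mod_cast (pderiv i).map_natCast 2
    have h3 : ∀ j : ℕ, pderiv i (j : MvPolynomial ι ℝ) = 0 := by
      intro j
      simp
    simp only [pderiv_mul, pderiv_pow, map_add, pderiv_linForm, pderiv_sqForm, h2, h3, pderiv_C,
      pderiv_X_self]
    push_cast
    ring
  have hk : (k : MvPolynomial ι ℝ) * linForm y ^ (k - 1) * linForm y = k * linForm y ^ k := by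
    rcases k with _ | k
    · simp
    · simp [pow_succ, mul_assoc]
  have hm : ((m * (m - 1 : ℕ) : ℕ) : MvPolynomial ι ℝ) * sqForm ^ (m - 1 - 1) * sqForm
      = ((m * (m - 1 : ℕ) : ℕ) : MvPolynomial ι ℝ) * sqForm ^ (m - 1) := by
    rcases m with _ | _ | m
    · simp
    · simp
    · simp [pow_succ, mul_assoc]
  rw [lapl, Finset.sum_congr rfl fun i _ => hi i]
  simp only [Finset.sum_add_distrib, ← Finset.mul_sum, h1, Finset.sum_const, nsmul_eq_mul,
    Finset.card_univ]
  rw [← linForm, ← sqForm]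
  push_cast at hm ⊢
  linear_combination (4 * (m : MvPolynomial ι ℝ) * sqForm ^ (m - 1)) * hk
    + 4 * linForm y ^ k * hm

/-- The degree `n` homogenization `∑ m, a m ⟨X, y⟩ ^ (n - 2 m) |X| ^ (2 m)` of
`t ↦ ∑ m, a m t ^ (n - 2 m)`, with pole `y`. -/
def zonal (n : ℕ) (a : ℕ → ℝ) (y : ι → ℝ) : MvPolynomial ι ℝ :=
  ∑ m ∈ Finset.range (n / 2 + 1), C (a m) * (linForm y ^ (n - 2 * m) * sqForm ^ m)

theorem zonal_isHomogeneous (n : ℕ) (a : ℕ → ℝ) (y : ι → ℝ) : (zonal n a y).IsHomogeneous n := by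
  have hl : (linForm y).IsHomogeneous 1 :=
    IsHomogeneous.sum _ _ _ fun i _ => isHomogeneous_C_mul_X _ _
  have hs : (sqForm : MvPolynomial ι ℝ).IsHomogeneous 2 :=
    IsHomogeneous.sum _ _ _ fun i _ => isHomogeneous_X_pow _ _
  refine IsHomogeneous.sum _ _ _ fun m hm => ?_
  have := (isHomogeneous_C ι (a m)).mul ((hl.pow (n - 2 * m)).mul (hs.pow m))
  convert this using 1
  have := Finset.mem_range.1 hm
  omega

theorem eval_zonal (n : ℕ) (a : ℕ → ℝ) (x y : ι → ℝ) (hx : ∑ i, x i ^ 2 = 1) :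
    eval x (zonal n a y) =
      ∑ m ∈ Finset.range (n / 2 + 1), a m * (∑ i, y i * x i) ^ (n - 2 * m) := by
  simp [zonal, linForm, sqForm, hx]

/-- In `d + 2` variables the recursion of the Gegenbauer equation says that the zonal polynomial
is harmonic. -/
theorem lapl_zonal {d n : ℕ} (hcard : Fintype.card ι = d + 2) (a : ℕ → ℝ)
    (ha : ∀ m, 2 * m + 2 ≤ n → ((n : ℝ) - 2 * m) * (n - 2 * m - 1) * a m
      + (2 * m + 2) * (2 * n - 2 * m - 2 + d) * a (m + 1) = 0)
    (y : ι → ℝ) (hy : ∑ i, y i ^ 2 = 1) : lapl (zonal n a y) = 0 := by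
  have hsum : lapl (zonal n a y) = ∑ m ∈ Finset.range (n / 2 + 1),
      C (a m) * lapl (linForm y ^ (n - 2 * m) * sqForm ^ m) := by
    simp only [lapl, zonal, map_sum, pderiv_C_mul, Finset.mul_sum]
    exact Finset.sum_comm
  rw [hsum]
  simp_rw [lapl_pow_mul_pow y hy, mul_add (C _), Finset.sum_add_distrib]
  rw [Finset.sum_range_succ, Finset.sum_range_succ' (fun m => C (a m) *
    (((m * (2 * Fintype.card ι + 4 * (m - 1 : ℕ) + 4 * (n - 2 * m)) : ℕ) : MvPolynomial ι ℝ)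
        * (linForm y ^ (n - 2 * m) * sqForm ^ (m - 1))))]
  have hlast : (n - 2 * (n / 2)) * (n - 2 * (n / 2) - 1) = 0 := by
    have : n - 2 * (n / 2) = 0 ∨ n - 2 * (n / 2) - 1 = 0 := by omega
    exact mul_eq_zero.2 this
  rw [hlast]
  simp only [Nat.cast_zero, zero_mul, mul_zero, add_zero]
  rw [← Finset.sum_add_distrib]
  refine Finset.sum_eq_zero fun m hm => ?_
  have hm' : 2 * m + 2 ≤ n := by
    have := Finset.mem_range.1 hm
    omega
  obtain ⟨k, rfl⟩ := Nat.exists_eq_add_of_le hm'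
  have e1 : 2 * m + 2 + k - 2 * m = k + 2 := by omega
  have e2 : 2 * m + 2 + k - 2 * (m + 1) = k := by omega
  have e3 : k + 2 - 1 = k + 1 := by omega
  rw [e1, e2, e3, hcard, Nat.add_sub_cancel, Nat.add_sub_cancel]
  have h := congrArg (C (σ := ι)) (ha m hm')
  push_cast at h
  simp only [map_add, map_mul, map_sub, map_natCast, map_ofNat, map_one, map_zero] at h
  push_cast
  linear_combination (linForm y ^ k * sqForm ^ m) * h

/-- The zonal kernel is, up to the factor `n!`, the Gram matrix of the zonal harmonics in the
Fischer form: they are harmonic, and each one is `⟨·, x⟩ ^ n` modulo multiples of `|X|²`. -/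
theorem zonal_posdef {d n : ℕ} (hcard : Fintype.card ι = d + 2) (a : ℕ → ℝ) (ha0 : a 0 = 1)
    (ha : ∀ m, 2 * m + 2 ≤ n → ((n : ℝ) - 2 * m) * (n - 2 * m - 1) * a m
      + (2 * m + 2) * (2 * n - 2 * m - 2 + d) * a (m + 1) = 0)
    {N : ℕ} (x : Fin N → ι → ℝ) (hx : ∀ i, ∑ k, x i k ^ 2 = 1) (c : Fin N → ℝ) :
    0 ≤ ∑ i, ∑ j, c i * c j * eval (x i) (zonal n a (x j)) := by
  have hrep : ∀ i j, fischer (zonal n a (x i)) (zonal n a (x j)) =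
      (n ! : ℝ) * eval (x i) (zonal n a (x j)) := by
    intro i j
    have hdec : ∃ R, zonal n a (x i) = linForm (x i) ^ n + sqForm * R := by
      refine ⟨∑ m ∈ Finset.range (n / 2),
        C (a (m + 1)) * (linForm (x i) ^ (n - 2 * (m + 1)) * sqForm ^ m), ?_⟩
      rw [zonal, Finset.sum_range_succ', Finset.mul_sum, add_comm]
      congr 1
      · simp [ha0]
      · exact Finset.sum_congr rfl fun m _ => by ring
    obtain ⟨R, hR⟩ := hdec
    rw [hR, map_add, LinearMap.add_apply, fischer_sqForm_mul, lapl_zonal hcard a ha _ (hx j),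
      map_zero, add_zero, fischer_linForm_pow _ _ _ (zonal_isHomogeneous n a _)]
  have h := fischer_self_nonneg (∑ i, c i • zonal n a (x i))
  simp only [map_sum, LinearMap.sum_apply, map_smul, LinearMap.smul_apply, hrep, smul_eq_mul] at h
  have hn : (0 : ℝ) < n ! := by exact_mod_cast n.factorial_pos
  refine nonneg_of_mul_nonneg_right (a := (n ! : ℝ)) ?_ hn
  refine h.trans_eq ?_
  rw [Finset.sum_comm, Finset.mul_sum]
  refine Finset.sum_congr rfl fun i _ => ?_
  rw [Finset.mul_sum, Finset.mul_sum]
  exact Finset.sum_congr rfl fun j _ => by ring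

end Fischer

/-! ### Positive definiteness on the sphere -/

/-- Positive definiteness of `Q` itself, tested on real coefficients. -/
theorem adjacent_posdef_real {d n : ℕ} (hd : 2 ≤ d) (Q : Polynomial ℝ) (hmonic : Q.Monic)
    (hdeg : Q.natDegree = n)
    (horth : ∀ j < n, ∫ t in (-1 : ℝ)..1, Q.eval t * t ^ j * jacW d t = 0)
    {N : ℕ} (x : Fin N → Sph d) (c : Fin N → ℝ) :
    0 ≤ ∑ i, ∑ j, c i * c j * Q.eval
      ⟪(x i : EuclideanSpace ℝ (Fin d)), (x j : EuclideanSpace ℝ (Fin d))⟫ := by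
  have hrec := coeff_rec hd Q hdeg horth
  -- Padding by two zero coordinates puts the points on the sphere of `ℝ^(d+2)`, for which `Q` is
  -- the zonal polynomial, without changing inner products.
  let X : Fin N → (Fin d ⊕ Fin 2) → ℝ := fun i =>
    Sum.elim (fun k => (x i : EuclideanSpace ℝ (Fin d)) k) 0
  have hX : ∀ i, ∑ k, X i k ^ 2 = 1 := by
    intro i
    have h1 : ‖(x i : EuclideanSpace ℝ (Fin d))‖ ^ 2 = 1 := by simp
    rw [EuclideanSpace.real_norm_sq_eq] at h1
    simpa [X] using h1
  have hXX : ∀ i j, ∑ k, X j k * X i k =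
      ⟪(x i : EuclideanSpace ℝ (Fin d)), (x j : EuclideanSpace ℝ (Fin d))⟫ := by
    intro i j
    simp [X, PiLp.inner_apply]
  have h := zonal_posdef (d := d) (n := n) (by simp) (fun m => Q.coeff (n - 2 * m))
    (by rw [← hdeg]; exact hmonic) ?_ X hX c
  · refine h.trans_eq (Finset.sum_congr rfl fun i _ => Finset.sum_congr rfl fun j _ => ?_)
    rw [eval_zonal _ _ _ _ (hX i), hXX, ← eval_eq_even Q hdeg hrec]
  · intro m hm
    obtain ⟨k, rfl⟩ := Nat.exists_eq_add_of_le hm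
    have h := hrec k
    have e1 : 2 * m + 2 + k - 2 * m = k + 2 := by omega
    have e2 : 2 * m + 2 + k - 2 * (m + 1) = k := by omega
    simp only [e1, e2]
    push_cast at h ⊢
    linear_combination h

/-- strengthened Krein condition. Let `Q` be the monic polynomial of
degree `n` orthogonal to all lower powers with respect to the weight
`(1-t²)^{(d-1)/2}` on `[-1,1]` (the adjacent Jacobi polynomial `Q_n^{1,1}`). Then
`t ↦ (t+1) Q(t)` is positive definite on `S^{d-1}`. -/
theorem krein_adjacent_jacobi_posdef
    {d n : ℕ} (hd : 2 ≤ d) (Q : Polynomial ℝ) (hmonic : Q.Monic)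
    (hdeg : Q.natDegree = n)
    (horth : ∀ j < n,
      ∫ t in (-1 : ℝ)..1, Q.eval t * t ^ j * (1 - t ^ 2) ^ (((d : ℝ) - 1) / 2) = 0) :
    IsPosDefOn d (fun t => (t + 1) * Q.eval t) := by
  intro N x c
  have hQ : ∀ c : Fin N → ℝ, 0 ≤ ∑ i, ∑ j, c i * c j * Q.eval
      ⟪(x i : EuclideanSpace ℝ (Fin d)), (x j : EuclideanSpace ℝ (Fin d))⟫ :=
    adjacent_posdef_real hd Q hmonic hdeg horth x
  have hreal : ∀ c : Fin N → ℝ, 0 ≤ ∑ i, ∑ j, c i * c j *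
      ((⟪(x i : EuclideanSpace ℝ (Fin d)), (x j : EuclideanSpace ℝ (Fin d))⟫ + 1) * Q.eval
      ⟪(x i : EuclideanSpace ℝ (Fin d)), (x j : EuclideanSpace ℝ (Fin d))⟫) := by
    intro c
    -- The factor `⟨x_i, x_j⟩` is a sum over coordinates `k` and is absorbed into the coefficients
    -- as `c i * x_i k`.
    refine (add_nonneg (hQ c) (Finset.sum_nonneg fun k (_ : k ∈ Finset.univ) =>
      hQ fun i => c i * (x i : EuclideanSpace ℝ (Fin d)) k)).trans_eq ?_
    rw [add_comm, Finset.sum_comm, ← Finset.sum_add_distrib]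
    refine Finset.sum_congr rfl fun i _ => ?_
    rw [Finset.sum_comm, ← Finset.sum_add_distrib]
    refine Finset.sum_congr rfl fun j _ => ?_
    have hin : ⟪(x i : EuclideanSpace ℝ (Fin d)), (x j : EuclideanSpace ℝ (Fin d))⟫ =
        ∑ k, (x i : EuclideanSpace ℝ (Fin d)) k * (x j : EuclideanSpace ℝ (Fin d)) k := by
      simp [PiLp.inner_apply, mul_comm]
    generalize Q.eval _ = q
    rw [hin, add_mul, one_mul, mul_add, Finset.sum_mul, Finset.mul_sum]
    congr 1
    exact Finset.sum_congr rfl fun k _ => by ring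
  refine (add_nonneg (hreal fun i => (c i).re) (hreal fun i => (c i).im)).trans_eq ?_
  rw [Complex.re_sum, ← Finset.sum_add_distrib]
  refine Finset.sum_congr rfl fun i _ => ?_
  rw [Complex.re_sum, ← Finset.sum_add_distrib]
  refine Finset.sum_congr rfl fun j _ => ?_
  rw [mul_assoc (Complex.ofReal _), Complex.re_ofReal_mul]
  simp only [Complex.mul_re, Complex.conj_re, Complex.conj_im]
  ring
end
end
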